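/- arXiv:1002.3338 — 3 statements merged into one kernel-verified Lean document; each statement's English description precedes it below -/
import Mathlib

section
/- Let D ⊆ ℝℙⁿ be a compact convex set and let (U_k) be a sequence of open convex sets with U_{k+1} ⊆ U_k for all k and ⋂_k U_k = D. Then D^e = ⋂_k U_k^e. -/
open scoped ComplexConjugate

noncomputable section

abbrev RV (n : ℕ) : Type := Fin (n + 1) → ℝ
abbrev CV (n : ℕ) : Type := Fin (n + 1) → ℂ
abbrev RP (n : ℕ) : Type := Projectivization ℝ (RV n)
abbrev CP (n : ℕ) : Type := Projectivization ℂ (CV n)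

/-- The quotient topology on a projectivization. -/
instance projTopology {K V : Type*} [DivisionRing K] [AddCommGroup V] [Module K V]
    [TopologicalSpace V] : TopologicalSpace (Projectivization K V) :=
  inferInstanceAs (TopologicalSpace (Quotient (projectivizationSetoid K V)))

/-- Complexification of a real vector. -/
def cplx {n : ℕ} (v : RV n) : CV n := fun i => (v i : ℂ)

/-- The closed (possibly degenerate) projective segment spanned by two lifts. -/
def realSeg {n : ℕ} (v₀ v₁ : RV n) : Set (RP n) :=
  {x | ∃ c₀ c₁ : ℝ, 0 ≤ c₀ * c₁ ∧ ∃ h : c₀ • v₀ + c₁ • v₁ ≠ 0,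
    x = Projectivization.mk ℝ (c₀ • v₀ + c₁ • v₁) h}

/-- The elliptic tube over the closed segment determined by the lifts `v₀ v₁`. -/
def segTube {n : ℕ} (v₀ v₁ : RV n) : Set (CP n) :=
  {z | ∃ c₀ c₁ : ℂ, 0 ≤ (c₀ * conj c₁).re ∧ ∃ h : c₀ • cplx v₀ + c₁ • cplx v₁ ≠ 0,
    z = Projectivization.mk ℂ (c₀ • cplx v₀ + c₁ • cplx v₁) h}

/-- The elliptic tube over a subset `D` of real projective space: the union of the tubes
over all closed segments contained in `D`. -/
def eTube {n : ℕ} (D : Set (RP n)) : Set (CP n) :=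
  ⋃ (v₀ : RV n) (v₁ : RV n) (_ : v₀ ≠ 0) (_ : v₁ ≠ 0) (_ : realSeg v₀ v₁ ⊆ D),
    segTube v₀ v₁

/-- Real projective lines. -/
def isLineR {n : ℕ} (L : Set (RP n)) : Prop :=
  ∃ W : Submodule ℝ (RV n), Module.finrank ℝ W = 2 ∧ L = {x | x.rep ∈ W}

/-- Convexity in real projective space: the set contains no projective line and its
intersection with every projective line is connected. -/
def convexR {n : ℕ} (D : Set (RP n)) : Prop :=
  (∀ L, isLineR L → ¬ L ⊆ D) ∧ ∀ L, isLineR L → IsPreconnected (D ∩ L)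

lemma continuous_projMk {n : ℕ} :
    Continuous fun v : {v : RV n // v ≠ 0} => Projectivization.mk ℝ v.1 v.2 :=
  continuous_quotient_mk'

lemma sum_sq_pos {n : ℕ} {v : RV n} (hv : v ≠ 0) : 0 < ∑ k, v k ^ 2 := by
  obtain ⟨i, hi⟩ := Function.ne_iff.mp hv
  exact Finset.sum_pos' (fun k _ => sq_nonneg _) ⟨i, Finset.mem_univ _, by
    have : v i ≠ 0 := hi
    positivity⟩

/-- The matrix of the orthogonal projection onto a real projective point. -/
def projMatrix {n : ℕ} (x : RP n) : Fin (n + 1) → Fin (n + 1) → ℝ :=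
  Projectivization.lift (fun v : {v : RV n // v ≠ 0} => fun i j =>
    v.1 i * v.1 j / ∑ k, v.1 k ^ 2) (by
      rintro ⟨a, ha⟩ ⟨b, hb⟩ t h
      have h : a = t • b := h
      have ht : t ≠ 0 := by
        rintro rfl
        exact ha (by simpa using h)
      have hs := (sum_sq_pos hb).ne'
      funext i j
      simp only [h, Pi.smul_apply, smul_eq_mul, mul_pow, ← Finset.mul_sum]
      field_simp) x

lemma continuous_projMatrix {n : ℕ} : Continuous (projMatrix (n := n)) := by
  refine Continuous.quotient_lift (continuous_pi fun i => continuous_pi fun j => ?_) _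
  have hc : ∀ k, Continuous fun v : {v : RV n // v ≠ 0} => v.1 k := fun k =>
    (continuous_apply k).comp continuous_subtype_val
  exact ((hc i).mul (hc j)).div (continuous_finsetSum _ fun k _ => (hc k).pow 2)
    fun v => (sum_sq_pos v.2).ne'

lemma projMatrix_injective {n : ℕ} : Function.Injective (projMatrix (n := n)) := by
  intro x y h
  induction x using Projectivization.ind with | h v hv => ?_
  induction y using Projectivization.ind with | h w hw => ?_
  have h' : ∀ i j, v i * v j / ∑ k, v k ^ 2 = w i * w j / ∑ k, w k ^ 2 := fun i j =>
    congrFun (congrFun h i) j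
  obtain ⟨j, hj⟩ := Function.ne_iff.mp hv
  have hj : v j ≠ 0 := hj
  have hs := (sum_sq_pos hv).ne'
  rw [Projectivization.mk_eq_mk_iff']
  refine ⟨w j / (∑ k, w k ^ 2) * ((∑ k, v k ^ 2) / v j), ?_⟩
  funext i
  calc w j / (∑ k, w k ^ 2) * ((∑ k, v k ^ 2) / v j) * w i
      = w i * w j / (∑ k, w k ^ 2) * ((∑ k, v k ^ 2) / v j) := by ring
    _ = v i := by
      rw [← h' i j]
      field_simp

instance projT2Space {n : ℕ} : T2Space (RP n) :=
  T2Space.of_injective_continuous projMatrix_injective continuous_projMatrix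

/-- The cone over a closed subset of real projective space is closed. -/
lemma isClosed_cone {n : ℕ} {D : Set (RP n)} (hD : IsClosed D) :
    IsClosed {v : RV n | ∀ h : v ≠ 0, Projectivization.mk ℝ v h ∈ D} := by
  have ho : IsOpen {v : RV n | v ≠ 0} := isOpen_ne
  have := ho.isOpenMap_subtype_val _ (hD.isOpen_compl.preimage continuous_projMk)
  rw [← isOpen_compl_iff]
  convert this using 1
  ext v
  simp

lemma mk_mem_realSeg {n : ℕ} {u v p : RV n} (hp : p ≠ 0) {a b : ℝ} (hab : 0 ≤ a * b)
    (h : p = a • u + b • v) : Projectivization.mk ℝ p hp ∈ realSeg u v := by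
  subst h
  exact ⟨a, b, hab, hp, rfl⟩

lemma mk_mem_segTube_iff {n : ℕ} {u v : RV n} {w : CV n} (hw : w ≠ 0) :
    Projectivization.mk ℂ w hw ∈ segTube u v ↔
      ∃ c₀ c₁ : ℂ, 0 ≤ (c₀ * conj c₁).re ∧ w = c₀ • cplx u + c₁ • cplx v := by
  constructor
  · rintro ⟨c₀, c₁, hc, h, hz⟩
    rw [Projectivization.mk_eq_mk_iff'] at hz
    obtain ⟨l, hl⟩ := hz
    refine ⟨l * c₀, l * c₁, ?_, by rw [← hl, smul_add, mul_smul, mul_smul]⟩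
    have : l * c₀ * conj (l * c₁) = ((Complex.normSq l : ℝ) : ℂ) * (c₀ * conj c₁) := by
      rw [Complex.normSq_eq_conj_mul_self, map_mul]
      ring
    rw [this, Complex.re_ofReal_mul]
    exact mul_nonneg (Complex.normSq_nonneg _) hc
  · rintro ⟨c₀, c₁, hc, h⟩
    subst h
    exact ⟨c₀, c₁, hc, hw, rfl⟩

lemma mem_eTube_iff {n : ℕ} {D : Set (RP n)} {z : CP n} :
    z ∈ eTube D ↔ ∃ u v : RV n, u ≠ 0 ∧ v ≠ 0 ∧ realSeg u v ⊆ D ∧ z ∈ segTube u v := by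
  simp only [eTube, Set.mem_iUnion, exists_prop]

lemma eTube_mono {n : ℕ} {D E : Set (RP n)} (h : D ⊆ E) : eTube D ⊆ eTube E := by
  intro z hz
  obtain ⟨u, v, hu, hv, hs, hz⟩ := mem_eTube_iff.mp hz
  exact mem_eTube_iff.mpr ⟨u, v, hu, hv, hs.trans h, hz⟩

lemma cplx_ne_zero {n : ℕ} {p : RV n} (hp : p ≠ 0) : cplx p ≠ 0 := by
  contrapose! hp
  funext i
  simpa [cplx] using congrFun hp i

lemma eq_smul_cplx_add_iff {n : ℕ} {w : CV n} {u v : RV n} {c₀ c₁ : ℂ} :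
    w = c₀ • cplx u + c₁ • cplx v ↔
      (fun i => (w i).re) = c₀.re • u + c₁.re • v ∧
      (fun i => (w i).im) = c₀.im • u + c₁.im • v := by
  simp only [funext_iff, Complex.ext_iff, forall_and]
  simp [cplx]

/-- The real points of an elliptic tube are the points of the set itself. -/
lemma mk_cplx_mem_eTube_iff {n : ℕ} {D : Set (RP n)} {p : RV n} (hp : p ≠ 0) :
    Projectivization.mk ℂ (cplx p) (cplx_ne_zero hp) ∈ eTube D ↔
      Projectivization.mk ℝ p hp ∈ D := by
  rw [mem_eTube_iff]
  constructor
  · rintro ⟨u, v, hu, hv, hs, hz⟩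
    obtain ⟨c₀, c₁, hc, h⟩ := (mk_mem_segTube_iff _).mp hz
    obtain ⟨hre, him⟩ := eq_smul_cplx_add_iff.mp h
    have hre : p = c₀.re • u + c₁.re • v := hre
    have him : 0 = c₀.im • u + c₁.im • v := him
    by_cases h1 : c₁.im = 0
    · have h0 : c₀.im = 0 := by simpa [h1, hu] using him.symm
      refine hs (mk_mem_realSeg hp ?_ hre)
      simpa [h0, h1] using hc
    · have hv' : v = (-(c₀.im / c₁.im)) • u := by
        funext i
        have := congrFun him i
        simp only [Pi.add_apply, Pi.smul_apply, smul_eq_mul, Pi.zero_apply] at this ⊢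
        field_simp
        linarith
      refine hs (mk_mem_realSeg hp (a := c₀.re + c₁.re * (-(c₀.im / c₁.im))) (b := 0)
        (by simp) ?_)
      rw [hre, zero_smul, add_zero, add_smul, mul_smul, ← hv']
  · intro h
    refine ⟨p, p, hp, hp, ?_, (mk_mem_segTube_iff _).mpr ⟨1, 0, by simp, by simp⟩⟩
    rintro _ ⟨a, b, -, hab, rfl⟩
    convert h using 1
    rw [Projectivization.mk_eq_mk_iff']
    exact ⟨a + b, add_smul _ _ _⟩

/-- A complex projective point is real, or has a lift with independent real and imaginary
parts. -/
lemma exists_real_or_linearIndependent {n : ℕ} (z : CP n) :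
    (∃ (p : RV n) (hp : p ≠ 0), z = Projectivization.mk ℂ (cplx p) (cplx_ne_zero hp)) ∨
    ∃ (w : CV n) (hw : w ≠ 0), z = Projectivization.mk ℂ w hw ∧
      LinearIndependent ℝ ![fun i => (w i).re, fun i => (w i).im] := by
  induction z using Projectivization.ind with | h w hw => ?_
  by_cases hli : LinearIndependent ℝ ![fun i => (w i).re, fun i => (w i).im]
  · exact Or.inr ⟨w, hw, rfl, hli⟩
  left
  by_cases hx : (fun i => (w i).re) = 0
  · refine ⟨fun i => (w i).im, ?_, ?_⟩
    · contrapose! hw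
      funext i
      exact Complex.ext (congrFun hx i) (congrFun hw i)
    · rw [Projectivization.mk_eq_mk_iff']
      refine ⟨Complex.I, ?_⟩
      funext i
      have := congrFun hx i
      apply Complex.ext <;> simp_all [cplx]
  · rw [LinearIndependent.pair_iff' hx] at hli
    push Not at hli
    obtain ⟨r, hr⟩ := hli
    refine ⟨_, hx, ?_⟩
    rw [Projectivization.mk_eq_mk_iff']
    refine ⟨1 + r * Complex.I, ?_⟩
    funext i
    have := congrFun hr i
    apply Complex.ext <;> simp_all [cplx]

/-- Pairs of unit complex numbers, at angle at most `π / 2`, whose associated open segment in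
the projective line through `x` and `y` lies in `U`. -/
def segParams {n : ℕ} (x y : RV n) (U : Set (RP n)) : Set (ℂ × ℂ) :=
  {d | ‖d.1‖ = 1 ∧ ‖d.2‖ = 1 ∧ 0 ≤ (d.1 * conj d.2).re ∧
    ∀ s t : ℝ, ∀ h : s • x + t • y ≠ 0,
      0 < (s * d.1.re + t * d.1.im) * (s * d.2.re + t * d.2.im) →
        Projectivization.mk ℝ (s • x + t • y) h ∈ U}

lemma isClosed_segParams {n : ℕ} (x y : RV n) (U : Set (RP n)) :
    IsClosed (segParams x y U) := by
  refine (isClosed_eq (by fun_prop) continuous_const).inter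
    ((isClosed_eq (by fun_prop) continuous_const).inter
    ((isClosed_le continuous_const (Complex.continuous_re.comp (by fun_prop))).inter ?_))
  change IsClosed {d : ℂ × ℂ | ∀ s t : ℝ, ∀ h : s • x + t • y ≠ 0,
      0 < (s * d.1.re + t * d.1.im) * (s * d.2.re + t * d.2.im) →
        Projectivization.mk ℝ (s • x + t • y) h ∈ U}
  simp only [Set.ofPred_forall]
  refine isClosed_iInter fun s => isClosed_iInter fun t => isClosed_iInter fun h => ?_
  by_cases hU : Projectivization.mk ℝ (s • x + t • y) h ∈ U
  · simp [hU]
  · simp only [hU, imp_false, not_lt]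
    exact isClosed_le (by fun_prop) continuous_const

lemma isCompact_segParams {n : ℕ} (x y : RV n) (U : Set (RP n)) :
    IsCompact (segParams x y U) := by
  refine ((isCompact_sphere (0 : ℂ) 1).prod (isCompact_sphere (0 : ℂ) 1)).of_isClosed_subset
    (isClosed_segParams x y U) ?_
  rintro ⟨a, b⟩ ⟨h1, h2, -⟩
  simpa using ⟨h1, h2⟩

lemma segParams_mono {n : ℕ} (x y : RV n) {U V : Set (RP n)} (h : U ⊆ V) :
    segParams x y U ⊆ segParams x y V :=
  fun _ hd => ⟨hd.1, hd.2.1, hd.2.2.1, fun s t hst hpos => h (hd.2.2.2 s t hst hpos)⟩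

lemma segParams_nonempty {n : ℕ} {w : CV n} (hw : w ≠ 0) {U : Set (RP n)}
    (hli : LinearIndependent ℝ ![fun i => (w i).re, fun i => (w i).im])
    (hz : Projectivization.mk ℂ w hw ∈ eTube U) :
    (segParams (fun i => (w i).re) (fun i => (w i).im) U).Nonempty := by
  obtain ⟨u, v, hu, hv, hs, hz⟩ := mem_eTube_iff.mp hz
  obtain ⟨c₀, c₁, hc, h⟩ := (mk_mem_segTube_iff _).mp hz
  obtain ⟨hx, hy⟩ := eq_smul_cplx_add_iff.mp h
  rw [LinearIndependent.pair_iff] at hli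
  set x : RV n := fun i => (w i).re
  set y : RV n := fun i => (w i).im
  have h0 : c₀ ≠ 0 := by
    rintro rfl
    have := hli c₁.im (-c₁.re) (by rw [hx, hy]; simp [smul_smul]; module)
    have h1 : c₁ = 0 := Complex.ext (by simpa using this.2) (by simpa using this.1)
    exact hw (by simpa [h1] using h)
  have h1 : c₁ ≠ 0 := by
    rintro rfl
    have := hli c₀.im (-c₀.re) (by rw [hx, hy]; simp [smul_smul]; module)
    exact h0 (Complex.ext (by simpa using this.2) (by simpa using this.1))
  have n0 : 0 < ‖c₀‖ := norm_pos_iff.mpr h0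
  have n1 : 0 < ‖c₁‖ := norm_pos_iff.mpr h1
  refine ⟨((‖c₀‖⁻¹ : ℝ) * c₀, (‖c₁‖⁻¹ : ℝ) * c₁), ?_, ?_, ?_, ?_⟩
  · simp [n0.ne']
  · simp [n1.ne']
  · have : ((‖c₀‖⁻¹ : ℝ) * c₀) * conj ((‖c₁‖⁻¹ : ℝ) * c₁) =
        ((‖c₀‖⁻¹ * ‖c₁‖⁻¹ : ℝ) : ℂ) * (c₀ * conj c₁) := by
      rw [map_mul, Complex.conj_ofReal, Complex.ofReal_mul]
      ring
    rw [this, Complex.re_ofReal_mul]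
    positivity
  · intro s t hst hpos
    simp only [Complex.re_ofReal_mul, Complex.im_ofReal_mul] at hpos
    refine hs (mk_mem_realSeg hst (a := s * c₀.re + t * c₀.im) (b := s * c₁.re + t * c₁.im)
      ?_ (by rw [hx, hy]; module))
    have e : (s * c₀.re + t * c₀.im) * (s * c₁.re + t * c₁.im) = (‖c₀‖ * ‖c₁‖) *
        ((s * (‖c₀‖⁻¹ * c₀.re) + t * (‖c₀‖⁻¹ * c₀.im)) *
          (s * (‖c₁‖⁻¹ * c₁.re) + t * (‖c₁‖⁻¹ * c₁.im))) := by
      field_simp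
    rw [e]
    positivity

/-- For closed `D`, parameters of an open segment in `D` also bound a closed segment in `D`. -/
lemma mk_mem_of_segParams {n : ℕ} {x y : RV n} {D : Set (RP n)} (hD : IsClosed D) {d : ℂ × ℂ}
    (hd : d ∈ segParams x y D) {s t : ℝ} (h : s • x + t • y ≠ 0)
    (hst : 0 ≤ (s * d.1.re + t * d.1.im) * (s * d.2.re + t * d.2.im)) :
    Projectivization.mk ℝ (s • x + t • y) h ∈ D := by
  obtain ⟨d₀, d₁⟩ := d
  obtain ⟨h0, h1, hre, hmem⟩ := hd
  simp only at h0 h1 hre hmem hst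
  have e0 : d₀.re ^ 2 + d₀.im ^ 2 = 1 := by
    have := Complex.sq_norm d₀
    rw [h0, Complex.normSq_apply] at this
    linarith
  have e1 : d₁.re ^ 2 + d₁.im ^ 2 = 1 := by
    have := Complex.sq_norm d₁
    rw [h1, Complex.normSq_apply] at this
    linarith
  have er : 0 ≤ d₀.re * d₁.re + d₀.im * d₁.im := by simpa using hre
  have key : ∀ r : ℝ, (∀ ε : ℝ, 0 < ε →
      0 < ((s + ε * (r * (d₀.re + d₁.re))) * d₀.re + (t + ε * (r * (d₀.im + d₁.im))) * d₀.im) *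
        ((s + ε * (r * (d₀.re + d₁.re))) * d₁.re + (t + ε * (r * (d₀.im + d₁.im))) * d₁.im)) →
      Projectivization.mk ℝ (s • x + t • y) h ∈ D := by
    intro r hr
    have hlim : Filter.Tendsto (fun ε : ℝ => (s + ε * (r * (d₀.re + d₁.re))) • x +
        (t + ε * (r * (d₀.im + d₁.im))) • y) (nhdsWithin 0 (Set.Ioi 0))
        (nhds (s • x + t • y)) := by
      refine (Continuous.tendsto' (by fun_prop) _ _ (by simp)).mono_left nhdsWithin_le_nhds
    refine (isClosed_cone hD).mem_of_tendsto hlim ?_ h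
    filter_upwards [self_mem_nhdsWithin] with ε hε hne
    exact hmem _ _ hne (hr ε hε)
  have expand : ∀ η : ℝ,
      ((s + η * (d₀.re + d₁.re)) * d₀.re + (t + η * (d₀.im + d₁.im)) * d₀.im) *
        ((s + η * (d₀.re + d₁.re)) * d₁.re + (t + η * (d₀.im + d₁.im)) * d₁.im) =
      ((s * d₀.re + t * d₀.im) + η * (1 + (d₀.re * d₁.re + d₀.im * d₁.im))) *
        ((s * d₁.re + t * d₁.im) + η * (1 + (d₀.re * d₁.re + d₀.im * d₁.im))) := by
    intro η
    congr 1
    · linear_combination η * e0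
    · linear_combination η * e1
  rcases mul_nonneg_iff.mp hst with ⟨ha, hb⟩ | ⟨ha, hb⟩
  · refine key 1 fun ε hε => ?_
    simp only [one_mul]
    rw [expand]
    positivity
  · refine key (-1) fun ε hε => ?_
    have := expand (-ε)
    simp only [neg_mul, one_mul, mul_neg] at this ⊢
    rw [this]
    have : 0 < ε * (1 + (d₀.re * d₁.re + d₀.im * d₁.im)) := by positivity
    apply mul_pos_of_neg_of_neg <;> linarith

lemma mk_mem_eTube_of_segParams {n : ℕ} {w : CV n} (hw : w ≠ 0) {D : Set (RP n)}
    (hD : IsClosed D) (hline : ∀ L, isLineR L → ¬ L ⊆ D)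
    (hli : LinearIndependent ℝ ![fun i => (w i).re, fun i => (w i).im])
    {d : ℂ × ℂ} (hd : d ∈ segParams (fun i => (w i).re) (fun i => (w i).im) D) :
    Projectivization.mk ℂ w hw ∈ eTube D := by
  have hcl := fun s t h hst => mk_mem_of_segParams hD hd (s := s) (t := t) h hst
  obtain ⟨d₀, d₁⟩ := d
  obtain ⟨h0, h1, hre, -⟩ := hd
  have hli' := LinearIndependent.pair_iff.mp hli
  simp only at h0 h1 hre hcl
  by_cases hne : d₀ = d₁
  · subst hne
    refine absurd ?_ (hline {p | p.rep ∈ Submodule.span ℝ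
      (Set.range ![fun i => (w i).re, fun i => (w i).im])}
      ⟨_, by simpa using finrank_span_eq_card hli, rfl⟩)
    intro p hp
    have hp : p.rep ∈ Submodule.span ℝ
      (Set.range ![fun i => (w i).re, fun i => (w i).im]) := hp
    rw [Matrix.range_cons, Matrix.range_cons, Matrix.range_empty, Set.union_empty,
      Set.singleton_union, Submodule.mem_span_pair] at hp
    obtain ⟨s, t, hst⟩ := hp
    have := hcl s t (hst ▸ p.rep_nonzero) (mul_self_nonneg _)
    simpa only [hst, Projectivization.mk_rep] using this
  have hΔ : d₀.re * d₁.im - d₀.im * d₁.re ≠ 0 := by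
    intro hΔ
    have e0 : d₀.re ^ 2 + d₀.im ^ 2 = 1 := by
      have := Complex.sq_norm d₀
      rw [h0, Complex.normSq_apply] at this
      linarith
    have e1 : d₁.re ^ 2 + d₁.im ^ 2 = 1 := by
      have := Complex.sq_norm d₁
      rw [h1, Complex.normSq_apply] at this
      linarith
    have er : 0 ≤ d₀.re * d₁.re + d₀.im * d₁.im := by simpa using hre
    have hone : d₀.re * d₁.re + d₀.im * d₁.im = 1 := by
      have : (d₀.re * d₁.re + d₀.im * d₁.im) ^ 2 = 1 := by
        linear_combination (d₁.re ^ 2 + d₁.im ^ 2) * e0 + e1 -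
          (d₀.re * d₁.im - d₀.im * d₁.re) * hΔ
      nlinarith
    apply hne
    apply Complex.ext
    · nlinarith [sq_nonneg (d₀.re - d₁.re), sq_nonneg (d₀.im - d₁.im)]
    · nlinarith [sq_nonneg (d₀.re - d₁.re), sq_nonneg (d₀.im - d₁.im)]
  have hd0 : ¬ (d₀.im = 0 ∧ d₀.re = 0) := fun h => hΔ (by simp [h.1, h.2])
  have hd1 : ¬ (d₁.im = 0 ∧ d₁.re = 0) := fun h => hΔ (by simp [h.1, h.2])
  set x : RV n := fun i => (w i).re with hx
  set y : RV n := fun i => (w i).im with hy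
  set δ := d₀.re * d₁.im - d₀.im * d₁.re with hδ
  refine mem_eTube_iff.mpr ⟨(d₁.im / δ) • x + (-d₁.re / δ) • y,
    (-d₀.im / δ) • x + (d₀.re / δ) • y, ?_, ?_, ?_, ?_⟩
  · intro h
    have := hli' _ _ h
    simp only [div_eq_zero_iff, hΔ, or_false, neg_eq_zero] at this
    exact hd1 this
  · intro h
    have := hli' _ _ h
    simp only [div_eq_zero_iff, hΔ, or_false, neg_eq_zero] at this
    exact hd0 this
  · rintro _ ⟨a, b, hab, hne', rfl⟩
    have e : a • ((d₁.im / δ) • x + (-d₁.re / δ) • y) +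
        b • ((-d₀.im / δ) • x + (d₀.re / δ) • y) =
        ((a * d₁.im - b * d₀.im) / δ) • x + ((b * d₀.re - a * d₁.re) / δ) • y := by
      module
    simp only [e] at hne' ⊢
    refine hcl _ _ hne' ?_
    have ea : (a * d₁.im - b * d₀.im) / δ * d₀.re + (b * d₀.re - a * d₁.re) / δ * d₀.im = a := by
      field_simp
      rw [hδ]
      ring
    have eb : (a * d₁.im - b * d₀.im) / δ * d₁.re + (b * d₀.re - a * d₁.re) / δ * d₁.im = b := by
      field_simp
      rw [hδ]
      ring
    rwa [ea, eb]
  · refine (mk_mem_segTube_iff _).mpr ⟨d₀, d₁, hre, eq_smul_cplx_add_iff.mpr ⟨?_, ?_⟩⟩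
    · rw [← hx]
      funext i
      simp only [Pi.add_apply, Pi.smul_apply, smul_eq_mul]
      field_simp
      rw [hδ]
      ring
    · rw [← hy]
      funext i
      simp only [Pi.add_apply, Pi.smul_apply, smul_eq_mul]
      field_simp
      rw [hδ]
      ring

/-- If `D ⊆ ℝℙⁿ` is compact convex and `(U_k)` is a decreasing sequence of
open convex sets with `⋂ U_k = D`, then `D^e = ⋂ U_k^e`. -/
theorem eTube_iInter
    (n : ℕ) (D : Set (RP n)) (hDc : IsCompact D) (hDconv : convexR D)
    (U : ℕ → Set (RP n)) (hUo : ∀ k, IsOpen (U k)) (hUc : ∀ k, convexR (U k))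
    (hUmono : ∀ k, U (k + 1) ⊆ U k) (hUinter : ⋂ k, U k = D) :
    eTube D = ⋂ k, eTube (U k) := by
  have hsub : ∀ k, D ⊆ U k := fun k => hUinter ▸ Set.iInter_subset U k
  refine Set.Subset.antisymm (Set.subset_iInter fun k => eTube_mono (hsub k)) fun z hz => ?_
  rw [Set.mem_iInter] at hz
  obtain ⟨p, hp, rfl⟩ | ⟨w, hw, rfl, hli⟩ := exists_real_or_linearIndependent z
  · rw [mk_cplx_mem_eTube_iff, ← hUinter, Set.mem_iInter]
    exact fun k => (mk_cplx_mem_eTube_iff hp).mp (hz k)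
  · obtain ⟨d, hd⟩ := IsCompact.nonempty_iInter_of_sequence_nonempty_isCompact_isClosed
      (fun k => segParams (fun i => (w i).re) (fun i => (w i).im) (U k))
      (fun k => segParams_mono _ _ (hUmono k))
      (fun k => segParams_nonempty hw hli (hz k))
      (isCompact_segParams _ _ _) (fun k => isClosed_segParams _ _ _)
    rw [Set.mem_iInter] at hd
    refine mk_mem_eTube_of_segParams hw hDc.isClosed hDconv.1 hli (d := d)
      ⟨(hd 0).1, (hd 0).2.1, (hd 0).2.2.1, fun s t h hpos => ?_⟩
    rw [← hUinter, Set.mem_iInter]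
    exact fun k => (hd k).2.2.2 s t h hpos
end
end

section
/- Let D ⊆ ℝℙⁿ be a properly convex set which is either open or compact. Then the dual complement of the elliptic tube of D equals the elliptic tube of the dual complement of D: (D^e)* = (D*)^e, where (D*)^e ⊆ (ℂℙⁿ)* is the elliptic tube of D* ⊆ (ℝℙⁿ)* formed in the dual projective spaces. -/
open scoped ComplexConjugate

noncomputable section

/-- Projective hyperplanes in real projective space. -/
def isHypR {n : ℕ} (H : Set (RP n)) : Prop :=
  ∃ ξ : Module.Dual ℝ (RV n), ξ ≠ 0 ∧ H = {x | ξ x.rep = 0}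

/-- Proper convexity in real projective space. -/
def properlyConvexR {n : ℕ} (D : Set (RP n)) : Prop :=
  convexR D ∧ (∀ H, isHypR H → ¬ D ⊆ H) ∧
    ∀ L, isLineR L → ∀ p ∈ L, ¬ (L \ {p}) ⊆ D

/-- The dual real projective space `(ℝℙⁿ)* = ℙ((ℝ^{n+1})*)`. -/
abbrev RPd (n : ℕ) : Type := Projectivization ℝ (Module.Dual ℝ (RV n))

/-- The dual complex projective space `(ℂℙⁿ)* = ℙ((ℂ^{n+1})*)`. -/
abbrev CPd (n : ℕ) : Type := Projectivization ℂ (Module.Dual ℂ (CV n))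

/-- The complex-linear extension of a real linear functional on `ℝ^{n+1}`. -/
def extLD {n : ℕ} (f : Module.Dual ℝ (RV n)) : Module.Dual ℂ (CV n) :=
  ∑ i, (f (Pi.single i 1) : ℂ) • (LinearMap.proj i : CV n →ₗ[ℂ] ℂ)

/-- The dual complement `D* ⊆ (ℝℙⁿ)*` of a set `D ⊆ ℝℙⁿ`. -/
def dualCompR {n : ℕ} (D : Set (RP n)) : Set (RPd n) :=
  {ξ | ∀ x ∈ D, ξ.rep x.rep ≠ 0}

/-- The dual complement `E* ⊆ (ℂℙⁿ)*` of a set `E ⊆ ℂℙⁿ`. -/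
def dualCompC {n : ℕ} (E : Set (CP n)) : Set (CPd n) :=
  {ξ | ∀ z ∈ E, ξ.rep z.rep ≠ 0}

/-- Closed (possibly degenerate) segments in the dual real projective space. -/
def realSegD {n : ℕ} (f₀ f₁ : Module.Dual ℝ (RV n)) : Set (RPd n) :=
  {x | ∃ c₀ c₁ : ℝ, 0 ≤ c₀ * c₁ ∧ ∃ h : c₀ • f₀ + c₁ • f₁ ≠ 0,
    x = Projectivization.mk ℝ (c₀ • f₀ + c₁ • f₁) h}

/-- The elliptic tube over the segment of the dual projective space given by lifts `f₀ f₁`. -/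
def segTubeD {n : ℕ} (f₀ f₁ : Module.Dual ℝ (RV n)) : Set (CPd n) :=
  {z | ∃ c₀ c₁ : ℂ, 0 ≤ (c₀ * conj c₁).re ∧ ∃ h : c₀ • extLD f₀ + c₁ • extLD f₁ ≠ 0,
    z = Projectivization.mk ℂ (c₀ • extLD f₀ + c₁ • extLD f₁) h}

/-- The elliptic tube over a subset of the dual real projective space. -/
def eTubeD {n : ℕ} (F : Set (RPd n)) : Set (CPd n) :=
  ⋃ (f₀ : Module.Dual ℝ (RV n)) (f₁ : Module.Dual ℝ (RV n)) (_ : f₀ ≠ 0) (_ : f₁ ≠ 0)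
    (_ : realSegD f₀ f₁ ⊆ F), segTubeD f₀ f₁

/-- The nonzero lifts of the points of a subset of a projectivization. -/
def liftSet {K V : Type*} [DivisionRing K] [AddCommGroup V] [Module K V]
    (D : Set (Projectivization K V)) : Set V :=
  {v | ∃ h : v ≠ 0, Projectivization.mk K v h ∈ D}

section Projectivization

variable {K V : Type*} [Field K] [AddCommGroup V] [Module K V]

lemma smul_mem_liftSet {D : Set (Projectivization K V)} {v : V} {c : K} (hc : c ≠ 0)
    (hv : v ∈ liftSet D) : c • v ∈ liftSet D := by
  obtain ⟨h, hm⟩ := hv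
  refine ⟨smul_ne_zero hc h, ?_⟩
  convert hm using 1
  exact (Projectivization.mk_eq_mk_iff' K _ _ _ _).2 ⟨c, rfl⟩

lemma rep_mem_liftSet {D : Set (Projectivization K V)} {x : Projectivization K V} (hx : x ∈ D) :
    x.rep ∈ liftSet D :=
  ⟨x.rep_nonzero, by rwa [Projectivization.mk_rep]⟩

lemma rep_mk_apply_rep_mk_ne_zero_iff {f : Module.Dual K V} (hf : f ≠ 0) {v : V} (hv : v ≠ 0) :
    (Projectivization.mk K f hf).rep (Projectivization.mk K v hv).rep ≠ 0 ↔ f v ≠ 0 := by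
  obtain ⟨a, ha⟩ := Projectivization.exists_smul_eq_mk_rep K f hf
  obtain ⟨b, hb⟩ := Projectivization.exists_smul_eq_mk_rep K v hv
  simp [← ha, ← hb, Units.smul_def]

lemma forall_mem_rep_apply_rep_ne_zero_iff {f : Module.Dual K V} (hf : f ≠ 0)
    {D : Set (Projectivization K V)} :
    (∀ x ∈ D, (Projectivization.mk K f hf).rep x.rep ≠ 0) ↔ ∀ v ∈ liftSet D, f v ≠ 0 := by
  constructor
  · rintro h v ⟨hv, hm⟩
    exact (rep_mk_apply_rep_mk_ne_zero_iff hf hv).1 (h _ hm)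
  · intro h x hx
    have := (rep_mk_apply_rep_mk_ne_zero_iff hf x.rep_nonzero).2 (h _ (rep_mem_liftSet hx))
    rwa [Projectivization.mk_rep] at this

end Projectivization

section Topology

variable {V : Type*} [AddCommGroup V] [Module ℝ V] [TopologicalSpace V]

lemma isOpen_liftSet [T1Space V] {D : Set (Projectivization ℝ V)} (hD : IsOpen D) :
    IsOpen (liftSet D) := by
  have h : IsOpen {v : {v : V // v ≠ 0} | Projectivization.mk ℝ v.1 v.2 ∈ D} := hD
  convert (isOpen_ne (x := (0 : V))).isOpenMap_subtype_val _ h using 1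
  ext v
  simp [liftSet]

lemma isOpen_rep_pos {q : V → ℝ} (hq : Continuous q) (hs : ∀ (c : ℝ) v, q (c • v) = c ^ 2 * q v) :
    IsOpen {x : Projectivization ℝ V | 0 < q x.rep} := by
  change IsOpen {v : {v : V // v ≠ 0} | 0 < q (Projectivization.mk ℝ v.1 v.2).rep}
  convert isOpen_lt (continuous_const (y := (0 : ℝ))) (hq.comp continuous_subtype_val) using 1
  ext ⟨v, hv⟩
  obtain ⟨a, ha⟩ := Projectivization.exists_smul_eq_mk_rep ℝ v hv
  have : 0 < (a : ℝ) ^ 2 := by have := a.ne_zero; positivity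
  simp [← ha, Units.smul_def, hs, this]

end Topology

/-- Two points of a set with preconnected linear sections are joined inside the set by one of the
two segments that they bound. -/
lemma realSeg_subset_or_of_isPreconnected {n : ℕ} {D : Set (RP n)}
    (hD : ∀ L, isLineR L → IsPreconnected (D ∩ L)) {v₀ v₁ : RV n}
    (h₀ : v₀ ∈ liftSet D) (h₁ : v₁ ∈ liftSet D) (hli : LinearIndependent ℝ ![v₀, v₁]) :
    realSeg v₀ v₁ ⊆ D ∨ realSeg v₀ (-v₁) ⊆ D := by
  have coeff : ∀ w : RV n, (w = v₁ ∨ w = -v₁) → ∀ a b : ℝ, 0 ≤ a * b →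
      ∀ h : a • v₀ + b • w ≠ 0, Projectivization.mk ℝ _ h ∉ D → 0 < a * b := by
    intro w hw a b hab h hm
    refine hab.lt_of_ne' fun h0 => hm ?_
    suffices a • v₀ + b • w ∈ liftSet D from this.2
    rcases mul_eq_zero.1 h0 with rfl | rfl
    · rw [zero_smul, zero_add] at h ⊢
      have hb := (smul_ne_zero_iff.1 h).1
      rcases hw with rfl | rfl
      · exact smul_mem_liftSet hb h₁
      · rw [smul_neg, ← neg_smul]
        exact smul_mem_liftSet (neg_ne_zero.2 hb) h₁
    · rw [zero_smul, add_zero] at h ⊢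
      exact smul_mem_liftSet (smul_ne_zero_iff.1 h).1 h₀
  by_contra! hcon
  simp only [Set.not_subset] at hcon
  obtain ⟨⟨_, ⟨a, b, hab, hm, rfl⟩, hmD⟩, ⟨_, ⟨c, d, hcd, hm', rfl⟩, hmD'⟩⟩ := hcon
  have hab := coeff v₁ (Or.inl rfl) a b hab hm hmD
  have hcd := coeff (-v₁) (Or.inr rfl) c d hcd hm' hmD'
  set l : (Fin 2 → ℝ) →ₗ[ℝ] RV n := Fintype.linearCombination ℝ ![v₀, v₁] with hl
  have hlk : LinearMap.ker l = ⊥ :=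
    LinearMap.ker_eq_bot.2 (linearIndependent_iff_injective_fintypeLinearCombination.1 hli)
  obtain ⟨r, hr⟩ := l.exists_leftInverse_of_injective hlk
  have hlv : ∀ s t : ℝ, l ![s, t] = s • v₀ + t • v₁ := by
    intro s t
    simp [hl, Fintype.linearCombination_apply]
  have hrv : ∀ s t : ℝ, r (s • v₀ + t • v₁) = ![s, t] := by
    intro s t
    rw [← hlv]
    exact LinearMap.congr_fun hr _
  have hr₀ : r v₀ = ![1, 0] := by simpa using hrv 1 0
  have hr₁ : r v₁ = ![0, 1] := by simpa using hrv 0 1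
  have hrc : Continuous r := r.continuous_of_finiteDimensional
  set q : RV n → ℝ := fun v => (b * r v 0 - a * r v 1) * (d * r v 0 + c * r v 1) with hq
  have hqc : Continuous q := by fun_prop
  have hqs : ∀ (t : ℝ) v, q (t • v) = t ^ 2 * q v := by
    intro t v
    simp [hq]
    ring
  have hpos := isOpen_rep_pos hqc hqs
  have hneg := isOpen_rep_pos hqc.neg (q := fun v => -q v) (fun t v => by rw [hqs]; ring)
  set L : Set (RP n) := {x | x.rep ∈ LinearMap.range l} with hL
  have hline : isLineR L :=
    ⟨_, by rw [LinearMap.finrank_range_of_inj (LinearMap.ker_eq_bot.1 hlk)]; simp, rfl⟩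
  have hne : ∀ x ∈ D ∩ L, q x.rep ≠ 0 := by
    rintro x ⟨hxD, y, hy⟩ h0
    have hye : y = ![y 0, y 1] := by ext i; fin_cases i <;> rfl
    rw [hye, hlv] at hy
    simp only [hq, ← hy, hrv] at h0
    simp only [Matrix.cons_val_zero, Matrix.cons_val_one] at h0
    have hx : y 0 • v₀ + y 1 • v₁ ∈ liftSet D := hy ▸ rep_mem_liftSet hxD
    have hx0 := hx.1
    rcases mul_eq_zero.1 h0 with h0 | h0
    · apply hmD
      have hb : b ≠ 0 := by rintro rfl; simp at hab
      have hk : y 1 ≠ 0 := by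
        intro h
        have : y 0 = 0 := by simpa [h, hb] using h0
        simp [h, this] at hx0
      have e : a • v₀ + b • v₁ = (b / y 1) • (y 0 • v₀ + y 1 • v₁) := by
        rw [smul_add, smul_smul, smul_smul]
        congr 2 <;> field_simp
        linarith
      exact (e ▸ smul_mem_liftSet (div_ne_zero hb hk) hx : a • v₀ + b • v₁ ∈ liftSet D).2
    · apply hmD'
      have hd : d ≠ 0 := by rintro rfl; simp at hcd
      have hk : y 1 ≠ 0 := by
        intro h
        have : y 0 = 0 := by simpa [h, hd] using h0
        simp [h, this] at hx0
      have e : c • v₀ + d • -v₁ = (-d / y 1) • (y 0 • v₀ + y 1 • v₁) := by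
        rw [smul_add, smul_smul, smul_smul, smul_neg, ← neg_smul]
        congr 2 <;> field_simp
        linarith
      exact (e ▸ smul_mem_liftSet (div_ne_zero (neg_ne_zero.2 hd) hk) hx :
        c • v₀ + d • -v₁ ∈ liftSet D).2
  have hmem : ∀ v ∈ liftSet D, v ∈ LinearMap.range l →
      ∃ x ∈ D ∩ L, ∃ t : ℝ, t ≠ 0 ∧ q x.rep = t ^ 2 * q v := by
    rintro v ⟨hv, hvD⟩ hvl
    obtain ⟨t, ht⟩ := Projectivization.exists_smul_eq_mk_rep ℝ v hv
    refine ⟨_, ⟨hvD, ?_⟩, t, t.ne_zero, ?_⟩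
    · rw [hL, Set.mem_ofPred_eq, ← ht]
      exact Submodule.smul_mem _ _ hvl
    · rw [← ht, ← hqs, Units.smul_def]
  obtain ⟨x₀, hx₀, t₀, ht₀, e₀⟩ := hmem v₀ h₀ ⟨![1, 0], by simp [hlv]⟩
  obtain ⟨x₁, hx₁, t₁, ht₁, e₁⟩ := hmem v₁ h₁ ⟨![0, 1], by simp [hlv]⟩
  have hx₀₁ : q x₀.rep * q x₁.rep < 0 := by
    rw [e₀, e₁]
    simp only [hq, hr₀, hr₁, Matrix.cons_val_zero, Matrix.cons_val_one]
    have : 0 < t₀ ^ 2 * t₁ ^ 2 * ((a * b) * (c * d)) := by positivity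
    nlinarith
  have hcover : D ∩ L ⊆ {x | 0 < q x.rep} ∪ {x | 0 < -q x.rep} := by
    intro x hx
    rcases (hne x hx).lt_or_gt with h | h
    · exact Or.inr (neg_pos.2 h)
    · exact Or.inl h
  have hinter : (D ∩ L ∩ ({x | 0 < q x.rep} ∩ {x | 0 < -q x.rep})).Nonempty := by
    apply hD L hline _ _ hpos hneg hcover
    · rcases mul_neg_iff.1 hx₀₁ with h | h
      · exact ⟨x₀, hx₀, h.1⟩
      · exact ⟨x₁, hx₁, h.2⟩
    · rcases mul_neg_iff.1 hx₀₁ with h | h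
      · exact ⟨x₁, hx₁, neg_pos.2 h.2⟩
      · exact ⟨x₀, hx₀, neg_pos.2 h.1⟩
  obtain ⟨x, -, h, h'⟩ := hinter
  simp only [Set.mem_ofPred_eq] at h h'
  linarith

section Complexification

variable {n : ℕ}

lemma cplx_smul (k : ℝ) (v : RV n) : cplx (k • v) = (k : ℂ) • cplx v := by
  ext i
  simp [cplx]

lemma cplx_add (v w : RV n) : cplx (v + w) = cplx v + cplx w := by
  ext i
  simp [cplx]

lemma extLD_smul (k : ℝ) (f : Module.Dual ℝ (RV n)) : extLD (k • f) = (k : ℂ) • extLD f := by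
  simp only [extLD, Finset.smul_sum, smul_smul, LinearMap.smul_apply, smul_eq_mul,
    Complex.ofReal_mul]

lemma extLD_sub (f g : Module.Dual ℝ (RV n)) : extLD (f - g) = extLD f - extLD g := by
  simp [extLD, sub_smul]

lemma extLD_cplx (f : Module.Dual ℝ (RV n)) (v : RV n) : extLD f (cplx v) = (f v : ℂ) := by
  conv_rhs => rw [pi_eq_sum_univ' v]
  simp [extLD, cplx, mul_comm, Pi.single]

/-- The real part of a complex functional, restricted to real vectors. -/
def rePart (ζ : Module.Dual ℂ (CV n)) : Module.Dual ℝ (RV n) where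
  toFun v := (ζ (cplx v)).re
  map_add' v w := by simp [cplx_add]
  map_smul' k v := by simp [cplx_smul]

/-- The imaginary part of a complex functional, restricted to real vectors. -/
def imPart (ζ : Module.Dual ℂ (CV n)) : Module.Dual ℝ (RV n) where
  toFun v := (ζ (cplx v)).im
  map_add' v w := by simp [cplx_add]
  map_smul' k v := by simp [cplx_smul]

lemma extLD_rePart_add_imPart (ζ : Module.Dual ℂ (CV n)) :
    extLD (rePart ζ) + Complex.I • extLD (imPart ζ) = ζ := by
  refine LinearMap.pi_ext' fun i => LinearMap.ext_ring ?_
  have h : (Pi.single i 1 : CV n) = cplx (Pi.single i 1) := by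
    ext j
    by_cases hj : j = i
    · subst hj; simp [cplx]
    · simp [cplx, hj]
  simp only [LinearMap.comp_apply, LinearMap.single_apply, h, LinearMap.add_apply,
    LinearMap.smul_apply, extLD_cplx, rePart, imPart, LinearMap.coe_mk, AddHom.coe_mk, smul_eq_mul]
  rw [mul_comm, Complex.re_add_im]

end Complexification

/-- A point of the elliptic tube over a segment can be written with lifts on which every real
functional that does not vanish on the segment takes values of the same sign. -/
lemma exists_tube_representation {V U : Type*} [AddCommGroup V] [Module ℝ V] [AddCommGroup U]
    [Module ℂ U] {j : V → U} (hj : ∀ (k : ℝ) v, j (k • v) = (k : ℂ) • j v)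
    {P : Set (Module.Dual ℝ V)} {v₀ v₁ : V} (h₀ : v₀ ≠ 0)
    (hP : ∀ f ∈ P, ∀ c₀ c₁ : ℝ, 0 ≤ c₀ * c₁ → c₀ • v₀ + c₁ • v₁ ≠ 0 → f (c₀ • v₀ + c₁ • v₁) ≠ 0)
    {d₀ d₁ : ℂ} (hd : 0 ≤ (d₀ * conj d₁).re) :
    ∃ (w : V) (e₀ e₁ : ℂ), d₀ • j v₀ + d₁ • j v₁ = e₀ • j v₀ + e₁ • j w ∧
      0 ≤ (e₀ * conj e₁).re ∧ ∀ f ∈ P, 0 < f v₀ * f w := by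
  have hne : ∀ f ∈ P, f v₀ ≠ 0 := by
    intro f hf
    simpa [h₀] using hP f hf 1 0 (by simp)
  by_cases hk : ∃ k : ℝ, v₁ = k • v₀
  · obtain ⟨k, rfl⟩ := hk
    refine ⟨v₀, d₀ + d₁ * k, 0, ?_, by simp, fun f hf => mul_self_pos.2 (hne f hf)⟩
    rw [hj, smul_smul, add_smul, zero_smul, add_zero]
  · refine ⟨v₁, d₀, d₁, rfl, hd, fun f hf => ?_⟩
    by_contra! hcon
    refine hP f hf (f v₁) (-f v₀) (by linarith) (fun h => hk ⟨(f v₀)⁻¹ * f v₁, ?_⟩) ?_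
    · rw [neg_smul, ← sub_eq_add_neg, sub_eq_zero] at h
      rw [mul_smul, h, inv_smul_smul₀ (hne f hf)]
    · simp only [map_add, map_smul, smul_eq_mul]
      ring

lemma re_mul_conj_pos {c₀ c₁ : ℂ} (hc : 0 ≤ (c₀ * conj c₁).re) (hne : c₀ ≠ 0 ∨ c₁ ≠ 0)
    {a b a' b' : ℝ} (haa : 0 < a * a') (hbb : 0 < b * b') (hab : 0 < a * b) :
    0 < ((c₀ * a + c₁ * b) * conj (c₀ * a' + c₁ * b')).re := by
  have e : ((c₀ * a + c₁ * b) * conj (c₀ * a' + c₁ * b')).re =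
      Complex.normSq c₀ * (a * a') + Complex.normSq c₁ * (b * b') +
        (c₀ * conj c₁).re * (a * b' + a' * b) := by
    simp [Complex.normSq_apply]
    ring
  have h1 : 0 < a * b' :=
    pos_of_mul_pos_left (b := b ^ 2) (by linarith [mul_pos hab hbb]) (sq_nonneg b)
  have h2 : 0 < a' * b :=
    pos_of_mul_pos_left (b := a ^ 2) (by linarith [mul_pos hab haa]) (sq_nonneg a)
  rw [e]
  have h3 := mul_nonneg hc (add_pos h1 h2).le
  have n0 := Complex.normSq_nonneg c₀
  have n1 := Complex.normSq_nonneg c₁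
  rcases hne with h | h
  · have := mul_pos (Complex.normSq_pos.2 h) haa
    have := mul_nonneg n1 hbb.le
    linarith
  · have := mul_pos (Complex.normSq_pos.2 h) hbb
    have := mul_nonneg n0 haa.le
    linarith

lemma mul_add_mul_ne_zero_of_re_pos {d₀ d₁ a₀ a₁ : ℂ} (hd : 0 ≤ (d₀ * conj d₁).re)
    (hne : d₀ ≠ 0 ∨ d₁ ≠ 0) (ha : 0 < (a₀ * conj a₁).re) : d₀ * a₀ + d₁ * a₁ ≠ 0 := by
  intro h
  have ha₀ : a₀ ≠ 0 := by rintro rfl; simp at ha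
  have e : (d₀ * conj d₁) * (a₀ * conj a₀) = -((d₁ * conj d₁) * conj (a₀ * conj a₁)) := by
    simp only [map_mul, Complex.conj_conj]
    linear_combination (conj d₁ * conj a₀) * h
  have e' := congrArg Complex.re e
  rw [Complex.mul_conj, Complex.mul_conj, Complex.re_mul_ofReal, Complex.neg_re,
    Complex.re_ofReal_mul, Complex.conj_re] at e'
  have hn := mul_nonneg hd (Complex.normSq_nonneg a₀)
  by_cases hd₁ : d₁ = 0
  · subst hd₁
    simp [ha₀] at h
    simp [h] at hne
  · have := mul_pos (Complex.normSq_pos.2 hd₁) ha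
    linarith

lemma eTubeD_dualCompR_subset {n : ℕ} (D : Set (RP n)) :
    eTubeD (dualCompR D) ⊆ dualCompC (eTube D) := by
  intro ξ hξ
  simp only [eTubeD, Set.mem_iUnion] at hξ
  obtain ⟨f₀, f₁, hf₀, hf₁, hf, c₀, c₁, hc, hne, rfl⟩ := hξ
  intro z hz
  simp only [eTube, Set.mem_iUnion] at hz
  obtain ⟨v₀, v₁, hv₀, hv₁, hv, d₀, d₁, hd, hne', rfl⟩ := hz
  rw [rep_mk_apply_rep_mk_ne_zero_iff]
  have hdual : ∀ f : Module.Dual ℝ (RV n), f ∈ liftSet (dualCompR D) →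
      ∀ v ∈ liftSet D, f v ≠ 0 := by
    rintro f ⟨hf0, hfm⟩
    exact (forall_mem_rep_apply_rep_ne_zero_iff hf0).1 hfm
  obtain ⟨g, k₀, k₁, hg, hk, hgp⟩ := exists_tube_representation
    (P := {ℓ | ∃ v ∈ liftSet D, ℓ = Module.Dual.eval ℝ (RV n) v}) extLD_smul hf₀
    (by
      rintro _ ⟨v, hvD, rfl⟩ a b hab h0
      exact hdual _ ⟨h0, hf ⟨a, b, hab, h0, rfl⟩⟩ v hvD) hc
  obtain ⟨w, l₀, l₁, hw, hl, hwp⟩ := exists_tube_representation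
    (P := {f | ∀ v ∈ liftSet D, f v ≠ 0}) cplx_smul hv₀
    (by
      intro f hfD a b hab h0
      exact hfD _ ⟨h0, hv ⟨a, b, hab, h0, rfl⟩⟩) hd
  have hmem₀ : v₀ ∈ liftSet D := ⟨hv₀, hv ⟨1, 0, by simp, by simpa using hv₀, by simp⟩⟩
  have hgD : ∀ v ∈ liftSet D, 0 < f₀ v * g v := fun v hvD => hgp _ ⟨v, hvD, rfl⟩
  have hf₀D := hwp f₀ fun v hvD => left_ne_zero_of_mul (hgD v hvD).ne'
  have hgwD := hwp g fun v hvD => right_ne_zero_of_mul (hgD v hvD).ne'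
  rw [hg] at hne ⊢
  rw [hw] at hne' ⊢
  have hk0 : k₀ ≠ 0 ∨ k₁ ≠ 0 := by
    by_contra! h
    simp [h] at hne
  have hl0 : l₀ ≠ 0 ∨ l₁ ≠ 0 := by
    by_contra! h
    simp [h] at hne'
  have key := mul_add_mul_ne_zero_of_re_pos hl hl0
    (re_mul_conj_pos hk hk0 hf₀D hgwD (hgD _ hmem₀))
  convert key using 1
  simp [extLD_cplx]
  ring

/-- A complex functional without zeros on the elliptic tube over a nondegenerate segment maps the
lifts of the end points to complex numbers at an acute angle. -/
lemma re_mul_conj_pos_of_realSeg_subset {n : ℕ} {D : Set (RP n)} {ζ : Module.Dual ℂ (CV n)}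
    (hζ : ∀ z ∈ liftSet (eTube D), ζ z ≠ 0) {v₀ v₁ : RV n}
    (hli : LinearIndependent ℝ ![v₀, v₁]) (hseg : realSeg v₀ v₁ ⊆ D) :
    0 < (ζ (cplx v₀) * conj (ζ (cplx v₁))).re := by
  rw [LinearIndependent.pair_iff] at hli
  have h₀ : v₀ ≠ 0 := by
    rintro rfl
    simpa using hli 1 0 (by simp)
  have h₁ : v₁ ≠ 0 := by
    rintro rfl
    simpa using hli 0 1 (by simp)
  have hcli : ∀ c₀ c₁ : ℂ, c₀ • cplx v₀ + c₁ • cplx v₁ = 0 → c₀ = 0 ∧ c₁ = 0 := by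
    intro c₀ c₁ h
    have hre := hli c₀.re c₁.re (by
      ext i
      simpa [cplx] using congrArg Complex.re (congrFun h i))
    have him := hli c₀.im c₁.im (by
      ext i
      simpa [cplx] using congrArg Complex.im (congrFun h i))
    exact ⟨Complex.ext hre.1 him.1, Complex.ext hre.2 him.2⟩
  have hval : ∀ c₀ c₁ : ℂ, 0 ≤ (c₀ * conj c₁).re → (c₀ ≠ 0 ∨ c₁ ≠ 0) →
      c₀ * ζ (cplx v₀) + c₁ * ζ (cplx v₁) ≠ 0 := by
    intro c₀ c₁ hc hne
    have h0 : c₀ • cplx v₀ + c₁ • cplx v₁ ≠ 0 := fun h => by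
      rcases hcli _ _ h with ⟨rfl, rfl⟩
      simp at hne
    have := hζ _ ⟨h0, by
      simp only [eTube, Set.mem_iUnion]
      exact ⟨v₀, v₁, h₀, h₁, hseg, c₀, c₁, hc, h0, rfl⟩⟩
    simpa using this
  by_contra! hcon
  have hw : ζ (cplx v₀) ≠ 0 := by simpa using hval 1 0 (by simp) (by simp)
  refine hval (ζ (cplx v₁)) (-ζ (cplx v₀)) ?_ (Or.inr (neg_ne_zero.2 hw)) (by ring)
  simp at hcon ⊢
  linarith

/-- The values of a complex functional on the real lifts of a set with preconnected linear sections
are pairwise at an acute angle up to sign, if the functional has no zeros on the elliptic tube. -/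
lemma re_mul_conj_pos_of_forall_ne_zero {n : ℕ} {D : Set (RP n)}
    (hD : ∀ L, isLineR L → IsPreconnected (D ∩ L)) {ζ : Module.Dual ℂ (CV n)}
    (hζ : ∀ z ∈ liftSet (eTube D), ζ z ≠ 0) {p : RV n} (hp : p ∈ liftSet D) :
    (∀ v ∈ liftSet D, (ζ (cplx v) * conj (ζ (cplx p))).re ≠ 0) ∧
    ∀ v ∈ liftSet D, ∀ w ∈ liftSet D, 0 < (ζ (cplx v) * conj (ζ (cplx p))).re →
      0 < (ζ (cplx w) * conj (ζ (cplx p))).re → 0 < (ζ (cplx v) * conj (ζ (cplx w))).re := by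
  have hne : ∀ v ∈ liftSet D, ζ (cplx v) ≠ 0 := by
    rintro v ⟨hv, hvD⟩
    have hc : cplx v ≠ 0 := fun h => hv (by
      ext i
      simpa [cplx] using congrFun h i)
    refine hζ _ ⟨hc, ?_⟩
    simp only [eTube, Set.mem_iUnion]
    refine ⟨v, v, hv, hv, ?_, 1, 0, by simp, by simpa using hc, by simp⟩
    rintro _ ⟨a, b, -, h0, rfl⟩
    rw [← add_smul] at h0
    simp only [← add_smul]
    exact (smul_mem_liftSet (smul_ne_zero_iff.1 h0).1 ⟨hv, hvD⟩).2
  have hpar : ∀ v ∈ liftSet D, ∀ w ∈ liftSet D, ¬ LinearIndependent ℝ ![v, w] →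
      ∃ k : ℝ, w = k • v := by
    intro v hv w _ h
    rw [LinearIndependent.pair_iff' hv.1] at h
    push Not at h
    exact h.imp fun _ h => h.symm
  have hnorm : ∀ v ∈ liftSet D, 0 < (ζ (cplx v) * conj (ζ (cplx v))).re := by
    intro v hv
    rw [Complex.mul_conj, Complex.ofReal_re]
    exact Complex.normSq_pos.2 (hne v hv)
  have hneg : ∀ v w : RV n, realSeg v (-w) ⊆ D → LinearIndependent ℝ ![v, w] →
      (ζ (cplx v) * conj (ζ (cplx w))).re < 0 := by
    intro v w h hli
    have hli' : LinearIndependent ℝ ![v, -w] := by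
      rw [LinearIndependent.pair_iff] at hli ⊢
      intro s t hst
      simpa using hli s (-t) (by simpa using hst)
    have := re_mul_conj_pos_of_realSeg_subset hζ hli' h
    rw [← neg_one_smul ℝ w, cplx_smul] at this
    simp at this ⊢
    linarith
  have hzero : ∀ v ∈ liftSet D, (ζ (cplx v) * conj (ζ (cplx p))).re ≠ 0 := by
    intro v hv
    by_cases hli : LinearIndependent ℝ ![v, p]
    · rcases realSeg_subset_or_of_isPreconnected hD hv hp hli with h | h
      · exact (re_mul_conj_pos_of_realSeg_subset hζ hli h).ne'
      · exact (hneg v p h hli).ne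
    · obtain ⟨k, rfl⟩ := hpar v hv p hp hli
      have hk : k ≠ 0 := (smul_ne_zero_iff.1 hp.1).1
      rw [cplx_smul, map_smul, smul_eq_mul, map_mul, Complex.conj_ofReal, mul_left_comm,
        Complex.re_ofReal_mul]
      exact mul_ne_zero hk (hnorm v hv).ne'
  refine ⟨hzero, fun v hv w hw hvp hwp => ?_⟩
  by_cases hli : LinearIndependent ℝ ![v, w]
  · rcases realSeg_subset_or_of_isPreconnected hD hv hw hli with h | h
    · exact re_mul_conj_pos_of_realSeg_subset hζ hli h
    · exfalso
      set a := (ζ (cplx v) * conj (ζ (cplx p))).re with ha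
      set b := (ζ (cplx w) * conj (ζ (cplx p))).re with hb
      have h0 : b • v + a • -w ≠ 0 := by
        intro h0
        rw [LinearIndependent.pair_iff] at hli
        exact hwp.ne' (hli b (-a) (by simpa using h0)).1
      apply hzero _ ⟨h0, h ⟨b, a, (mul_pos hwp hvp).le, h0, rfl⟩⟩
      rw [smul_neg, ← neg_smul, cplx_add, cplx_smul, cplx_smul, map_add, map_smul, map_smul,
        smul_eq_mul, smul_eq_mul, add_mul, mul_assoc, mul_assoc, Complex.add_re,
        Complex.re_ofReal_mul, Complex.re_ofReal_mul, ← ha, ← hb]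
      ring
  · obtain ⟨k, rfl⟩ := hpar v hv w hw hli
    rw [cplx_smul, map_smul, smul_eq_mul] at hwp ⊢
    rw [mul_assoc, Complex.re_ofReal_mul] at hwp
    rw [map_mul, Complex.conj_ofReal, mul_left_comm, Complex.re_ofReal_mul]
    exact mul_pos (pos_of_mul_pos_left hwp hvp.le) (hnorm v hv)

/-- A quotient of two linear functionals attains its maximum on a compact set of the real
projective space where the denominator does not vanish. -/
lemma exists_forall_div_le_of_isCompact {n : ℕ} {D : Set (RP n)} (hD : IsCompact D)
    (hne : (liftSet D).Nonempty) {X Y : Module.Dual ℝ (RV n)} (hX : ∀ v ∈ liftSet D, X v ≠ 0) :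
    ∃ w ∈ liftSet D, ∀ v ∈ liftSet D, Y v / X v ≤ Y w / X w := by
  have husc : UpperSemicontinuousOn (fun x : RP n => Y x.rep / X x.rep) D := by
    intro x hx y hy
    have hXc : Continuous X := X.continuous_of_finiteDimensional
    have hYc : Continuous Y := Y.continuous_of_finiteDimensional
    have key : ∀ x' ∈ D, 0 < (y * X x'.rep - Y x'.rep) * X x'.rep ↔ Y x'.rep / X x'.rep < y := by
      intro x' hx'
      have h0 := hX _ (rep_mem_liftSet hx')
      have e : (y * X x'.rep - Y x'.rep) * X x'.rep =
          (y - Y x'.rep / X x'.rep) * X x'.rep ^ 2 := by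
        field_simp
      rw [e, mul_pos_iff_of_pos_right (by positivity), sub_pos]
    have hopen := isOpen_rep_pos (q := fun v => (y * X v - Y v) * X v) (by fun_prop)
      (fun c v => by simp; ring)
    filter_upwards [mem_nhdsWithin_of_mem_nhds (hopen.mem_nhds ((key x hx).2 hy)),
      self_mem_nhdsWithin] with x' h1 h2
    exact (key x' h2).1 h1
  obtain ⟨u, hu0, huD⟩ := hne
  obtain ⟨x, hx, hmax⟩ := husc.exists_isMaxOn ⟨_, huD⟩ hD
  refine ⟨x.rep, rep_mem_liftSet hx, ?_⟩
  rintro v ⟨hv, hvD⟩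
  have := hmax hvD
  obtain ⟨a, ha⟩ := Projectivization.exists_smul_eq_mk_rep ℝ v hv
  simpa [← ha, Units.smul_def, mul_div_mul_left] using this

/-- A quotient of two linear functionals that is not constant attains no maximum on an open
set. -/
lemma exists_div_lt_of_isOpen {n : ℕ} {C : Set (RV n)} (hC : IsOpen C)
    {X Y : Module.Dual ℝ (RV n)} (hX : ∀ v ∈ C, X v ≠ 0) {v : RV n} (hv : v ∈ C)
    (hne : Y ≠ (Y v / X v) • X) : ∃ w ∈ C, Y v / X v < Y w / X w := by
  set m := Y v / X v with hm
  have hXv := hX v hv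
  obtain ⟨e, he⟩ : ∃ e, 0 < (Y e - m * X e) * X v := by
    obtain ⟨e, he⟩ : ∃ e, Y e - m * X e ≠ 0 := by
      by_contra! h
      exact hne (LinearMap.ext fun e => by simpa using sub_eq_zero.1 (h e))
    rcases (mul_ne_zero he hXv).lt_or_gt with h | h
    · refine ⟨-e, ?_⟩
      simp only [map_neg]
      linarith
    · exact ⟨e, h⟩
  have hXc : Continuous X := X.continuous_of_finiteDimensional
  have hpath : Continuous fun t : ℝ => v + t • e := by fun_prop
  have hmem : ∀ᶠ t : ℝ in nhds 0, v + t • e ∈ C :=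
    hpath.continuousAt.eventually_mem (hC.mem_nhds (by simpa using hv))
  have hsign : ∀ᶠ t : ℝ in nhds 0, 0 < X (v + t • e) * X v := by
    have hc : Continuous fun t : ℝ => X (v + t • e) * X v := by fun_prop
    exact hc.continuousAt.eventually_mem (isOpen_Ioi.mem_nhds (by simpa using mul_self_pos.2 hXv))
  obtain ⟨t, ⟨htC, htX⟩, ht⟩ :=
    (((hmem.and hsign).filter_mono nhdsWithin_le_nhds).and
      (self_mem_nhdsWithin : Set.Ioi (0 : ℝ) ∈ nhdsWithin 0 (Set.Ioi 0))).exists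
  refine ⟨_, htC, ?_⟩
  have hY : Y v = m * X v := by rw [hm]; field_simp
  have h0 := hX _ htC
  have hdiff : Y (v + t • e) / X (v + t • e) - m =
      t * ((Y e - m * X e) * X v) / (X (v + t • e) * X v) := by
    rw [mul_comm (X (v + t • e)), ← mul_assoc, mul_comm (X v), mul_div_mul_right _ _ hXv]
    rw [div_sub' h0]
    congr 1
    simp only [map_add, map_smul, smul_eq_mul, hY]
    ring
  have : 0 < t * ((Y e - m * X e) * X v) / (X (v + t • e) * X v) :=
    div_pos (mul_pos ht he) htX
  linarith

/-- Slopes that pairwise satisfy `1 + s * t > 0` on an open or compact set lie strictly between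
two bounds `N < M` with `1 + M * N ≥ 0`. -/
lemma exists_slope_bounds {n : ℕ} {D : Set (RP n)} (hD : IsOpen D ∨ IsCompact D)
    {X Y : Module.Dual ℝ (RV n)} (hX : ∀ v ∈ liftSet D, X v ≠ 0)
    (hpos : ∀ v ∈ liftSet D, ∀ w ∈ liftSet D, 0 < 1 + (Y v / X v) * (Y w / X w))
    {p : RV n} (hp : p ∈ liftSet D) (hYp : Y p = 0) :
    ∃ N M : ℝ, N < M ∧ 0 ≤ 1 + M * N ∧ ∀ v ∈ liftSet D, N < Y v / X v ∧ Y v / X v < M := by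
  rcases hD with hD | hD
  · by_cases hY : Y = 0
    · exact ⟨-1, 1, by norm_num, by norm_num, by simp [hY]⟩
    have hopen := isOpen_liftSet hD
    have hnc : ∀ v ∈ liftSet D, Y ≠ (Y v / X v) • X := by
      intro v _ h
      have h1 := LinearMap.congr_fun h p
      rw [hYp, LinearMap.smul_apply, smul_eq_mul, eq_comm, mul_eq_zero, or_iff_left (hX p hp)] at h1
      rw [h1, zero_smul] at h
      exact hY h
    have hgt : ∀ v ∈ liftSet D, ∃ w ∈ liftSet D, Y v / X v < Y w / X w :=
      fun v hv => exists_div_lt_of_isOpen hopen hX hv (hnc v hv)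
    have hlt : ∀ v ∈ liftSet D, ∃ w ∈ liftSet D, Y w / X w < Y v / X v := by
      intro v hv
      obtain ⟨w, hw, h⟩ := exists_div_lt_of_isOpen (Y := -Y) hopen hX hv (fun h => hnc v hv (by
        rw [← neg_inj, h]
        rw [LinearMap.neg_apply, neg_div]
        module))
      refine ⟨w, hw, ?_⟩
      simp only [LinearMap.neg_apply, neg_div] at h
      linarith
    set T : Set ℝ := (fun v => Y v / X v) '' liftSet D with hT
    have hTne : T.Nonempty := ⟨_, p, hp, rfl⟩
    obtain ⟨u, hu, hup⟩ := hgt p hp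
    obtain ⟨l, hl, hlp⟩ := hlt p hp
    simp only [hYp, zero_div] at hup hlp
    have hbound : ∀ m : ℝ, m < 0 → (∀ v ∈ liftSet D, 0 ≤ 1 + (Y v / X v) * m) →
        ∀ v ∈ liftSet D, Y v / X v ≤ -1 / m := by
      intro m hm h v hv
      rw [le_div_iff_of_neg hm]
      linarith [h v hv]
    have hbdd : BddAbove T := ⟨-1 / (Y l / X l), by
      rintro _ ⟨v, hv, rfl⟩
      exact hbound _ hlp (fun v hv => (hpos v hv l hl).le) v hv⟩
    have hle : ∀ v ∈ liftSet D, Y v / X v ≤ sSup T := fun v hv => le_csSup hbdd ⟨v, hv, rfl⟩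
    have hM : 0 < sSup T := hup.trans_le (hle u hu)
    have hmul : ∀ v ∈ liftSet D, 0 ≤ 1 + sSup T * (Y v / X v) := by
      intro v hv
      rcases le_or_gt 0 (Y v / X v) with h | h
      · positivity
      · have : sSup T ≤ -1 / (Y v / X v) := csSup_le hTne (by
          rintro _ ⟨w, hw, rfl⟩
          exact hbound _ h (fun w hw => (hpos w hw v hv).le) w hw)
        rw [le_div_iff_of_neg h] at this
        linarith
    have hlow : ∀ v ∈ liftSet D, -1 / sSup T ≤ Y v / X v := by
      intro v hv
      rw [div_le_iff₀ hM]
      linarith [hmul v hv]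
    refine ⟨-1 / sSup T, sSup T, ?_, ?_, fun v hv => ⟨?_, ?_⟩⟩
    · exact (hlow l hl).trans_lt (hlp.trans hM)
    · rw [mul_div_cancel₀ _ hM.ne']
      norm_num
    · obtain ⟨w, hw, h⟩ := hlt v hv
      exact (hlow w hw).trans_lt h
    · obtain ⟨w, hw, h⟩ := hgt v hv
      exact h.trans_le (hle w hw)
  · obtain ⟨u, hu, hmax⟩ := exists_forall_div_le_of_isCompact (Y := Y) hD ⟨p, hp⟩ hX
    obtain ⟨l, hl, hmin⟩ := exists_forall_div_le_of_isCompact (Y := -Y) hD ⟨p, hp⟩ hX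
    simp only [LinearMap.neg_apply, neg_div, neg_le_neg_iff] at hmin
    have hul := hpos u hu l hl
    have hlu := hmin u hu
    set a := Y u / X u
    set b := Y l / X l
    obtain ⟨ε, hε, hε1, hεab⟩ : ∃ ε : ℝ, 0 < ε ∧ ε ≤ 1 ∧ ε * (a - b + 1) ≤ 1 + a * b := by
      have hab : 0 < a - b + 1 := by linarith
      refine ⟨min 1 ((1 + a * b) / (a - b + 1)), by positivity, min_le_left _ _, ?_⟩
      exact (le_div_iff₀ hab).1 (min_le_right _ _)
    refine ⟨b - ε, a + ε, by linarith, by nlinarith, fun v hv => ⟨?_, ?_⟩⟩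
    · linarith [hmin v hv]
    · linarith [hmax v hv]

lemma dualCompC_eTube_subset {n : ℕ} {D : Set (RP n)} (hD : IsOpen D ∨ IsCompact D)
    (hconn : ∀ L, isLineR L → IsPreconnected (D ∩ L)) (hne : D.Nonempty) :
    dualCompC (eTube D) ⊆ eTubeD (dualCompR D) := by
  intro ξ hξ
  induction ξ using Projectivization.ind with
  | h ζ hζ0 =>
  have hζ : ∀ z ∈ liftSet (eTube D), ζ z ≠ 0 :=
    (forall_mem_rep_apply_rep_ne_zero_iff hζ0).1 hξ
  obtain ⟨x, hx⟩ := hne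
  set p := x.rep
  have hp : p ∈ liftSet D := rep_mem_liftSet hx
  obtain ⟨hzero, hacute⟩ := re_mul_conj_pos_of_forall_ne_zero hconn hζ hp
  have hw : ζ (cplx p) ≠ 0 := fun h => hzero p hp (by simp [h])
  set η : Module.Dual ℂ (CV n) := conj (ζ (cplx p)) • ζ with hη
  set X := rePart η with hXdef
  set Y := imPart η with hYdef
  have hXv : ∀ v, X v = (ζ (cplx v) * conj (ζ (cplx p))).re := by
    intro v
    simp only [hXdef, hη, rePart, LinearMap.coe_mk, AddHom.coe_mk, LinearMap.smul_apply,
      smul_eq_mul, mul_comm]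
  have hYv : ∀ v, Y v = (ζ (cplx v) * conj (ζ (cplx p))).im := by
    intro v
    simp only [hYdef, hη, imPart, LinearMap.coe_mk, AddHom.coe_mk, LinearMap.smul_apply,
      smul_eq_mul, mul_comm]
  have hX : ∀ v ∈ liftSet D, X v ≠ 0 := fun v hv => by
    rw [hXv]
    exact hzero v hv
  have hYp : Y p = 0 := by
    rw [hYv, Complex.mul_conj, Complex.ofReal_im]
  have hquad : ∀ v w, X v * X w + Y v * Y w =
      Complex.normSq (ζ (cplx p)) * (ζ (cplx v) * conj (ζ (cplx w))).re := by
    intro v w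
    rw [hXv, hXv, hYv, hYv]
    simp [Complex.normSq_apply]
    ring
  have hslope : ∀ v ∈ liftSet D, ∀ w ∈ liftSet D, 0 < X v → 0 < X w →
      0 < 1 + (Y v / X v) * (Y w / X w) := by
    intro v hv w hw' hv0 hw0
    have h := hacute v hv w hw' (by rwa [← hXv]) (by rwa [← hXv])
    have h' := mul_pos (Complex.normSq_pos.2 hw) h
    rw [← hquad] at h'
    have e : 1 + (Y v / X v) * (Y w / X w) = (X v * X w + Y v * Y w) / (X v * X w) := by
      field_simp
    rw [e]
    positivity
  have hflip : ∀ v ∈ liftSet D, ∃ v' ∈ liftSet D, 0 < X v' ∧ Y v' / X v' = Y v / X v := by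
    intro v hv
    rcases (hX v hv).lt_or_gt with h | h
    · exact ⟨(-1 : ℝ) • v, smul_mem_liftSet (by norm_num) hv, by simpa using h, by simp⟩
    · exact ⟨v, hv, h, rfl⟩
  obtain ⟨N, M, hNM, hMN, hbd⟩ := exists_slope_bounds hD hX (by
    intro v hv w hw'
    obtain ⟨v', hv', hv0, ev⟩ := hflip v hv
    obtain ⟨w', hw'', hw0, ew⟩ := hflip w hw'
    rw [← ev, ← ew]
    exact hslope v' hv' w' hw'' hv0 hw0) hp hYp
  set f₀ := Y - N • X with hf₀
  set f₁ := M • X - Y with hf₁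
  have hff : ∀ v ∈ liftSet D, 0 < f₀ v * f₁ v := by
    intro v hv
    have h0 := hX v hv
    obtain ⟨h1, h2⟩ := hbd v hv
    have e : f₀ v * f₁ v = X v ^ 2 * ((Y v / X v - N) * (M - Y v / X v)) := by
      simp only [hf₀, hf₁, LinearMap.sub_apply, LinearMap.smul_apply, smul_eq_mul]
      field_simp
    rw [e]
    have := mul_pos (sub_pos.2 h1) (sub_pos.2 h2)
    positivity
  have hsum : (1 + Complex.I * M) • extLD f₀ + (1 + Complex.I * N) • extLD f₁ =
      (((M : ℂ) - N) * conj (ζ (cplx p))) • ζ := by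
    rw [mul_smul, ← hη, ← extLD_rePart_add_imPart η, ← hXdef, ← hYdef, hf₀, hf₁, extLD_sub,
      extLD_sub, extLD_smul, extLD_smul]
    module
  have hcoef : ((M : ℂ) - N) * conj (ζ (cplx p)) ≠ 0 := by
    refine mul_ne_zero (sub_ne_zero.2 ?_) ((map_ne_zero _).2 hw)
    exact_mod_cast hNM.ne'
  simp only [eTubeD, Set.mem_iUnion]
  refine ⟨f₀, f₁, ?_, ?_, ?_, 1 + Complex.I * M, 1 + Complex.I * N, ?_, ?_, ?_⟩
  · intro h
    simpa [h] using hff p hp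
  · intro h
    simpa [h] using hff p hp
  · rintro _ ⟨a, b, hab, h0, rfl⟩
    refine (forall_mem_rep_apply_rep_ne_zero_iff h0).2 fun v hv h => h0 ?_
    have hv' := hff v hv
    simp only [LinearMap.add_apply, LinearMap.smul_apply, smul_eq_mul] at h
    have e : a * b * (f₀ v * f₁ v) = -(b * f₁ v) ^ 2 := by
      linear_combination (b * f₁ v) * h
    have hb : b = 0 := by
      have : (b * f₁ v) ^ 2 = 0 := by nlinarith [mul_nonneg hab hv'.le, sq_nonneg (b * f₁ v)]
      simpa [right_ne_zero_of_mul hv'.ne'] using this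
    have ha : a = 0 := by simpa [hb, left_ne_zero_of_mul hv'.ne'] using h
    simp [ha, hb]
  · simpa using hMN
  · rw [hsum]
    exact smul_ne_zero hcoef hζ0
  · refine ((Projectivization.mk_eq_mk_iff' ℂ _ _ _ _).2 ⟨_, hsum.symm⟩).symm

/-- If `D ⊆ ℝℙⁿ` is properly convex and open or compact, then
`(D^e)* = (D*)^e`. -/
theorem dualComp_eTube_eq_eTubeD_dualComp
    (n : ℕ) (D : Set (RP n)) (hD : IsOpen D ∨ IsCompact D) (hpc : properlyConvexR D) :
    dualCompC (eTube D) = eTubeD (dualCompR D) := by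
  have hne : D.Nonempty := by
    by_contra h
    rw [Set.not_nonempty_iff_eq_empty] at h
    obtain ⟨ξ, hξ⟩ := exists_ne (0 : Module.Dual ℝ (RV n))
    exact hpc.2.1 _ ⟨ξ, hξ, rfl⟩ (h ▸ Set.empty_subset _)
  exact (dualCompC_eTube_subset hD hpc.1.2 hne).antisymm (eTubeD_dualCompR_subset D)
end
end

section
/- Let D ⊆ ℝℙⁿ be an open properly convex set whose boundary ∂D is of class C¹. Then the elliptic tube D^e ⊆ ℂℙⁿ is ℂ-convex. -/
open scoped ComplexConjugate

noncomputable section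

/-- Complex projective lines in `ℂℙⁿ`. -/
def isLineC {n : ℕ} (L : Set (CP n)) : Prop :=
  ∃ W : Submodule ℂ (CV n), Module.finrank ℂ W = 2 ∧ L = {z | z.rep ∈ W}

/-- ℂ-convexity: the set contains no complex projective line, and its intersection with
every complex projective line is connected and simply connected. -/
def cConvex {n : ℕ} (E : Set (CP n)) : Prop :=
  (∀ L, isLineC L → ¬ L ⊆ E) ∧
    ∀ L, isLineC L → IsPreconnected (E ∩ L) ∧
      ((E ∩ L).Nonempty → SimplyConnectedSpace ↥(E ∩ L))

/-- The affine chart `ℝⁿ = ℝℙⁿ \ H` of real projective space associated to `g ∈ GL(n+1,ℝ)`,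
sending `x` to the class of `g (x, 1)`. -/
def chartMap {n : ℕ} (g : Matrix.GeneralLinearGroup (Fin (n + 1)) ℝ) (x : Fin n → ℝ) : RP n :=
  Projectivization.mk ℝ ((g : Matrix (Fin (n + 1)) (Fin (n + 1)) ℝ).mulVec (Fin.snoc x 1))
    (by
      intro h0
      have h1 : ((↑g⁻¹ : Matrix (Fin (n + 1)) (Fin (n + 1)) ℝ) *
          (↑g : Matrix (Fin (n + 1)) (Fin (n + 1)) ℝ)).mulVec (Fin.snoc x 1) = 0 := by
        rw [← Matrix.mulVec_mulVec, h0, Matrix.mulVec_zero]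
      rw [Units.inv_mul, Matrix.one_mulVec] at h1
      have h2 := congrFun h1 (Fin.last n)
      simp [Fin.snoc_last] at h2)

/-- The boundary of `A ⊆ ℝⁿ` is of class `C¹`: near every boundary point it is the zero
set of a `C¹` function with nonvanishing gradient. -/
def boundaryC1 {n : ℕ} (A : Set (Fin n → ℝ)) : Prop :=
  ∀ h ∈ frontier A, ∃ (U : Set (Fin n → ℝ)) (f : (Fin n → ℝ) → ℝ),
    IsOpen U ∧ h ∈ U ∧ ContDiffOn ℝ 1 f U ∧
    frontier A ∩ U = {x ∈ U | f x = 0} ∧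
    ∀ x ∈ frontier A ∩ U, fderiv ℝ f x ≠ 0

section Projective

variable {K V : Type*} [Field K] [AddCommGroup V] [Module K V]

/-- The representative of a projective point on which the linear form `η` takes the value `1`
(and `0` if `η` vanishes at the point). -/
def affineRep (η : V →ₗ[K] K) (x : Projectivization K V) : V := (η x.rep)⁻¹ • x.rep

lemma affineRep_mk (η : V →ₗ[K] K) (v : V) (hv : v ≠ 0) :
    affineRep η (Projectivization.mk K v hv) = (η v)⁻¹ • v := by
  obtain ⟨a, ha⟩ := Projectivization.exists_smul_eq_mk_rep K v hv
  have ha0 : (a : K) ≠ 0 := a.ne_zero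
  rw [affineRep, ← ha, Units.smul_def, map_smul, smul_smul, smul_eq_mul, mul_inv,
    mul_comm, ← mul_assoc, mul_inv_cancel₀ ha0, one_mul]

lemma form_rep_mk_ne_zero_iff (η : V →ₗ[K] K) (v : V) (hv : v ≠ 0) :
    η (Projectivization.mk K v hv).rep ≠ 0 ↔ η v ≠ 0 := by
  obtain ⟨a, ha⟩ := Projectivization.exists_smul_eq_mk_rep K v hv
  rw [← ha, Units.smul_def, map_smul, smul_eq_mul, mul_ne_zero_iff_left a.ne_zero]

lemma rep_mk_mem_iff (W : Submodule K V) (v : V) (hv : v ≠ 0) :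
    (Projectivization.mk K v hv).rep ∈ W ↔ v ∈ W := by
  obtain ⟨a, ha⟩ := Projectivization.exists_smul_eq_mk_rep K v hv
  rw [← ha, Units.smul_def, W.smul_mem_iff a.ne_zero]

lemma mk_smul_eq (a : K) (v : V) (hv : v ≠ 0) (h : a • v ≠ 0) :
    Projectivization.mk K (a • v) h = Projectivization.mk K v hv :=
  (Projectivization.mk_eq_mk_iff' K _ _ h hv).2 ⟨a, rfl⟩

variable [TopologicalSpace V]

lemma isQuotientMap_mk' :
    Topology.IsQuotientMap (Projectivization.mk' K : {v : V // v ≠ 0} → Projectivization K V) :=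
  isQuotientMap_quot_mk

lemma isOpen_form_ne_zero [TopologicalSpace K] [T1Space K] (η : V →ₗ[K] K) (hη : Continuous η) :
    IsOpen {x : Projectivization K V | η x.rep ≠ 0} := by
  rw [← isQuotientMap_mk'.isOpen_preimage]
  have h : Projectivization.mk' K ⁻¹' {x : Projectivization K V | η x.rep ≠ 0} =
      {v : {v : V // v ≠ 0} | η v ≠ 0} := by
    ext v
    exact form_rep_mk_ne_zero_iff η v.1 v.2
  rw [h]
  exact isOpen_ne.preimage (hη.comp continuous_subtype_val)

lemma continuousOn_affineRep [TopologicalSpace K] [T1Space K] [ContinuousInv₀ K]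
    [ContinuousSMul K V] (η : V →ₗ[K] K) (hη : Continuous η) :
    ContinuousOn (affineRep η) {x : Projectivization K V | η x.rep ≠ 0} := by
  rw [isQuotientMap_mk'.continuousOn_isOpen_iff (isOpen_form_ne_zero η hη)]
  have h : affineRep η ∘ Projectivization.mk' K =
      fun v : {v : V // v ≠ 0} => (η v)⁻¹ • (v : V) := by
    ext v
    exact affineRep_mk η v.1 v.2
  rw [h]
  have hc : Continuous fun v : {v : V // v ≠ 0} => η v := hη.comp continuous_subtype_val
  exact (hc.continuousOn.inv₀ fun v hv => (form_rep_mk_ne_zero_iff η v.1 v.2).1 hv).smul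
    continuous_subtype_val.continuousOn

end Projective

section Cone

variable {V : Type*} [AddCommGroup V] [Module ℝ V]

/-- The part of the cone over `D` on which the linear form `η` is positive. -/
def coneOver (η : V →ₗ[ℝ] ℝ) (D : Set (Projectivization ℝ V)) : Set V :=
  {v | 0 < η v ∧ ∃ h : v ≠ 0, Projectivization.mk ℝ v h ∈ D}

variable {η : V →ₗ[ℝ] ℝ} {D : Set (Projectivization ℝ V)}

lemma smul_mem_coneOver {v : V} (hv : v ∈ coneOver η D) {c : ℝ} (hc : 0 < c) :
    c • v ∈ coneOver η D := by
  obtain ⟨h1, h2, h3⟩ := hv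
  have h : c • v ≠ 0 := smul_ne_zero hc.ne' h2
  exact ⟨by rw [map_smul]; exact mul_pos hc h1, h, by rwa [mk_smul_eq c v h2 h]⟩

lemma mem_coneOver_or_neg_mem (hD : ∀ v h, Projectivization.mk ℝ v h ∈ D → η v ≠ 0)
    {v : V} (h : v ≠ 0) (hv : Projectivization.mk ℝ v h ∈ D) :
    v ∈ coneOver η D ∨ -v ∈ coneOver η D := by
  rcases lt_or_gt_of_ne (hD v h hv) with h0 | h0
  · refine Or.inr ⟨by rw [map_neg]; linarith, neg_ne_zero.2 h, ?_⟩
    rwa [(Projectivization.mk_eq_mk_iff' ℝ _ _ (neg_ne_zero.2 h) h).2 ⟨-1, by simp⟩]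
  · exact Or.inl ⟨h0, h, hv⟩

lemma isOpen_coneOver [TopologicalSpace V] [T1Space V] (hη : Continuous η) (hD : IsOpen D) :
    IsOpen (coneOver η D) := by
  have h : coneOver η D = {v | 0 < η v} ∩ Subtype.val '' (Projectivization.mk' ℝ ⁻¹' D) := by
    ext v
    simp only [coneOver, Set.mem_ofPred_eq, Set.mem_inter_iff, Set.mem_image, Set.mem_preimage,
      Subtype.exists, Projectivization.mk'_eq_mk, exists_and_right, exists_eq_right]
  rw [h]
  exact (isOpen_lt continuous_const hη).inter
    (isOpen_ne.isOpenMap_subtype_val _ (hD.preimage isQuotientMap_mk'.continuous))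

lemma convex_coneOver_of_add
    (hadd : ∀ v ∈ coneOver η D, ∀ w ∈ coneOver η D, v + w ∈ coneOver η D) :
    Convex ℝ (coneOver η D) :=
  convex_iff_forall_pos.2 fun _ hv _ hw _ _ ha hb _ =>
    hadd _ (smul_mem_coneOver hv ha) _ (smul_mem_coneOver hw hb)

end Cone

/-- Over a convex set avoiding the hyperplane `η = 0`, the cone is closed under addition. -/
lemma add_mem_coneOver {n : ℕ} {D : Set (RP n)} {η : RV n →ₗ[ℝ] ℝ}
    (hD : ∀ v h, Projectivization.mk ℝ v h ∈ D → η v ≠ 0) (hconv : convexR D)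
    {v w : RV n} (hv : v ∈ coneOver η D) (hw : w ∈ coneOver η D) :
    v + w ∈ coneOver η D := by
  obtain ⟨hv0, hvn, hvD⟩ := hv
  obtain ⟨hw0, hwn, hwD⟩ := hw
  have hη : Continuous η := η.continuous_of_finiteDimensional
  have hs : 0 < η (v + w) := by rw [map_add]; linarith
  have hsn : v + w ≠ 0 := fun h => by simp [h] at hs
  refine ⟨hs, hsn, ?_⟩
  by_cases hli : LinearIndependent ℝ ![v, w]
  swap
  · rw [LinearIndependent.pair_iff' hvn] at hli
    push Not at hli
    obtain ⟨a, rfl⟩ := hli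
    have e : v + a • v = (1 + a) • v := by rw [add_smul, one_smul]
    rwa [(Projectivization.mk_eq_mk_iff' ℝ _ _ hsn hvn).2 ⟨1 + a, e.symm⟩]
  have hpair := LinearIndependent.pair_iff.1 hli
  let W : Submodule ℝ (RV n) := Submodule.span ℝ (Set.range ![v, w])
  have hW : Module.finrank ℝ W = 2 := by simpa using finrank_span_eq_card hli
  have hmemW : ∀ u, u ∈ W ↔ ∃ a b : ℝ, a • v + b • w = u := fun u => by
    rw [← Submodule.mem_span_pair, ← Matrix.range_cons_cons_empty v w ![]]
  -- a coordinate separating the normalised endpoints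
  have hne : (η v)⁻¹ • v ≠ (η w)⁻¹ • w := fun h => by
    have := hpair (η v)⁻¹ (-(η w)⁻¹) (by rw [h]; simp)
    exact inv_ne_zero hv0.ne' this.1
  obtain ⟨i, hi⟩ := Function.ne_iff.1 hne
  set L : Set (RP n) := {x | x.rep ∈ W} with hL
  have hpre := hconv.2 L ⟨W, hW, rfl⟩
  have hcont : ContinuousOn (fun x => affineRep η x i) (D ∩ L) := by
    refine ((continuous_apply i).comp_continuousOn (continuousOn_affineRep η hη)).mono ?_
    rintro x ⟨hx, -⟩
    exact hD _ x.rep_nonzero (by rwa [x.mk_rep])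
  have himg := (hpre.image _ hcont).ordConnected
  have hvm : (η v)⁻¹ * v i ∈ (fun x => affineRep η x i) '' (D ∩ L) :=
    ⟨_, ⟨hvD, (rep_mk_mem_iff W v hvn).2 ((hmemW v).2 ⟨1, 0, by simp⟩)⟩, by
      simp [affineRep_mk]⟩
  have hwm : (η w)⁻¹ * w i ∈ (fun x => affineRep η x i) '' (D ∩ L) :=
    ⟨_, ⟨hwD, (rep_mk_mem_iff W w hwn).2 ((hmemW w).2 ⟨0, 1, by simp⟩)⟩, by
      simp [affineRep_mk]⟩
  have hmid : (η (v + w))⁻¹ * (v + w) i ∈ segment ℝ ((η v)⁻¹ * v i) ((η w)⁻¹ * w i) := by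
    refine ⟨η v / η (v + w), η w / η (v + w), by positivity, by positivity, ?_, ?_⟩
    · rw [← add_div, ← map_add, div_self hs.ne']
    · simp only [smul_eq_mul, Pi.add_apply]
      field_simp
  obtain ⟨x, ⟨hxD, hxL⟩, hx⟩ := himg.convex.segment_subset hvm hwm hmid
  obtain ⟨a, b, hab⟩ := (hmemW x.rep).1 hxL
  have hxη : η x.rep ≠ 0 := hD _ x.rep_nonzero (by rwa [x.mk_rep])
  have hηx : η x.rep = a * η v + b * η w := by rw [← hab]; simp
  have hηs : η (v + w) = η v + η w := map_add _ _ _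
  have hxi : x.rep i = a * v i + b * w i := by rw [← hab]; simp
  simp only [affineRep, Pi.smul_apply, smul_eq_mul, Pi.add_apply] at hx hi
  have hmul : x.rep i * η (v + w) = (v i + w i) * η x.rep := by
    field_simp at hx
    linarith
  have hi' : v i * η w - w i * η v ≠ 0 := fun h => hi (by field_simp; linarith)
  have heq : a = b := by
    rw [hxi, hηx, hηs] at hmul
    have : (a - b) * (v i * η w - w i * η v) = 0 := by linear_combination hmul
    exact sub_eq_zero.1 ((mul_eq_zero.1 this).resolve_right hi')
  subst heq
  rw [← smul_add] at hab
  have : x = Projectivization.mk ℝ (v + w) hsn := by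
    rw [← x.mk_rep]
    exact (Projectivization.mk_eq_mk_iff' ℝ _ _ _ _).2 ⟨a, hab⟩
  rwa [← this]

section Tube

variable {n : ℕ}

/-- The set of complex vectors with real and imaginary parts in `C`. -/
def biTube (C : Set (RV n)) : Set (CV n) :=
  {z | (fun i => (z i).re) ∈ C ∧ (fun i => (z i).im) ∈ C}

lemma isOpen_biTube {C : Set (RV n)} (hC : IsOpen C) : IsOpen (biTube C) :=
  (hC.preimage (by fun_prop)).inter (hC.preimage (by fun_prop))

lemma convex_biTube {C : Set (RV n)} (hC : Convex ℝ C) : Convex ℝ (biTube C) := by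
  intro z hz w hw a b ha hb hab
  constructor
  · convert hC hz.1 hw.1 ha hb hab using 1
    ext i
    simp
  · convert hC hz.2 hw.2 ha hb hab using 1
    ext i
    simp

lemma cplx_add_I_smul_mem_biTube {C : Set (RV n)} {p q : RV n} (hp : p ∈ C) (hq : q ∈ C) :
    cplx p + Complex.I • cplx q ∈ biTube C := by
  constructor
  · simpa [cplx] using hp
  · simpa [cplx] using hq

lemma eq_cplx_re_add_I_smul (z : CV n) :
    z = cplx (fun i => (z i).re) + Complex.I • cplx (fun i => (z i).im) := by
  ext i
  simp [cplx, mul_comm Complex.I]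

/-- A combination of two vectors of a convex cone with coefficients forming an angle at most
`π / 2` has a complex multiple with real and imaginary parts in the cone. -/
lemma exists_smul_mem_biTube {C : Set (RV n)} (hadd : ∀ v ∈ C, ∀ w ∈ C, v + w ∈ C)
    (hsmul : ∀ v ∈ C, ∀ c : ℝ, 0 < c → c • v ∈ C) {v w : RV n} (hv : v ∈ C) (hw : w ∈ C)
    {a b : ℂ} (hab : 0 ≤ (a * conj b).re) (h0 : a • cplx v + b • cplx w ≠ 0) :
    ∃ c : ℂ, c • (a • cplx v + b • cplx w) ∈ biTube C := by
  wlog him : 0 ≤ (b * conj a).im generalizing v w a b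
  · rw [add_comm (a • cplx v)] at h0 ⊢
    refine this hw hv (a := b) (b := a) ?_ h0 ?_
    · simp only [Complex.mul_re, Complex.conj_re, Complex.conj_im] at hab ⊢
      linarith
    · simp only [Complex.mul_im, Complex.conj_re, Complex.conj_im] at him ⊢
      linarith
  have real_case : ∀ u ∈ C, ∀ c : ℂ, c ≠ 0 → ∃ d : ℂ, d • (c • cplx u) ∈ biTube C := by
    intro u hu c hc
    refine ⟨(1 + Complex.I) * c⁻¹, ?_⟩
    rw [smul_smul, mul_assoc, inv_mul_cancel₀ hc, mul_one, add_smul, one_smul]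
    exact cplx_add_I_smul_mem_biTube hu hu
  by_cases ha : a = 0
  · subst ha
    rw [zero_smul, zero_add] at h0 ⊢
    exact real_case w hw b fun hb => h0 (by rw [hb, zero_smul])
  have hna : 0 < Complex.normSq a := Complex.normSq_pos.2 ha
  have hre : 0 ≤ (b * conj a).re := by
    simp only [Complex.mul_re, Complex.conj_re, Complex.conj_im] at hab ⊢
    linarith
  set d := b * conj a with hd
  have hp : Complex.normSq a • v + d.re • w ∈ C := by
    rcases hre.eq_or_lt with h | h
    · simpa [← h] using hsmul v hv _ hna
    · exact hadd _ (hsmul v hv _ hna) _ (hsmul w hw _ h)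
  have hz : conj a • (a • cplx v + b • cplx w) =
      cplx (Complex.normSq a • v + d.re • w) + Complex.I • cplx (d.im • w) := by
    have h1 : conj a * a = (Complex.normSq a : ℂ) := Complex.normSq_eq_conj_mul_self.symm
    have h2 : conj a * b = d.re + d.im * Complex.I := by rw [Complex.re_add_im, hd, mul_comm]
    ext i
    simp only [cplx, Pi.smul_apply, Pi.add_apply, smul_eq_mul, Complex.ofReal_add,
      Complex.ofReal_mul]
    linear_combination (v i : ℂ) * h1 + (w i : ℂ) * h2
  rcases him.eq_or_lt with h | h
  · obtain ⟨c, hc⟩ := real_case _ hp 1 one_ne_zero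
    refine ⟨c * conj a, ?_⟩
    rw [← smul_smul, hz, ← h]
    convert hc using 2
    ext i
    simp [cplx]
  · exact ⟨conj a, hz ▸ cplx_add_I_smul_mem_biTube hp (hsmul w hw _ h)⟩

lemma cplx_neg (v : RV n) : cplx (-v) = -cplx v := by
  ext i
  simp [cplx]

/-- The elliptic tube over a convex set consists of the classes of vectors whose real and
imaginary parts lie in the cone over the set. -/
lemma mk_mem_eTube_iff {D : Set (RP n)} {η : RV n →ₗ[ℝ] ℝ}
    (hD : ∀ v h, Projectivization.mk ℝ v h ∈ D → η v ≠ 0) (hconv : convexR D)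
    (z : CV n) (hz : z ≠ 0) :
    Projectivization.mk ℂ z hz ∈ eTube D ↔ ∃ c : ℂ, c • z ∈ biTube (coneOver η D) := by
  have hadd : ∀ v ∈ coneOver η D, ∀ w ∈ coneOver η D, v + w ∈ coneOver η D :=
    fun v hv w hw => add_mem_coneOver hD hconv hv hw
  have hsmul : ∀ v ∈ coneOver η D, ∀ c : ℝ, 0 < c → c • v ∈ coneOver η D :=
    fun v hv c hc => smul_mem_coneOver hv hc
  constructor
  · intro h
    simp only [eTube, Set.mem_iUnion] at h
    obtain ⟨v, w, hv, hw, hseg, a, b, hab, h0, hmk⟩ := h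
    suffices ∃ c : ℂ, c • (a • cplx v + b • cplx w) ∈ biTube (coneOver η D) by
      obtain ⟨c, hc⟩ := this
      obtain ⟨d, hd⟩ := (Projectivization.mk_eq_mk_iff' ℂ _ _ h0 hz).1 hmk.symm
      exact ⟨c * d, by rwa [← smul_smul, hd]⟩
    have hvD : Projectivization.mk ℝ v hv ∈ D :=
      hseg ⟨1, 0, by simp, by simpa using hv, by simp⟩
    have hwD : Projectivization.mk ℝ w hw ∈ D :=
      hseg ⟨0, 1, by simp, by simpa using hw, by simp⟩
    -- endpoints on opposite sides of `η = 0` represent the same point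
    have opp : ∀ p q : RV n, p ∈ coneOver η D → -q ∈ coneOver η D → realSeg p q ⊆ D →
        η p • q = η q • p := by
      intro p q hp hq hpq
      have hq0 : 0 < -η q := by simpa using hq.1
      by_contra hne
      have hne' : (-η q) • p + η p • q ≠ 0 := fun h => hne (by
        rw [neg_smul] at h
        exact (neg_add_eq_zero.1 h).symm)
      refine hD _ hne' (hpq ⟨-η q, η p, (mul_pos hq0 hp.1).le, hne', rfl⟩) ?_
      simp only [map_add, map_smul, smul_eq_mul]
      ring
    have mixed : ∀ (p q : RV n) (a b : ℂ), p ∈ coneOver η D → η p • q = η q • p →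
        a • cplx p + b • cplx q ≠ 0 →
        ∃ c : ℂ, c • (a • cplx p + b • cplx q) ∈ biTube (coneOver η D) := by
      intro p q a b hp hq h0
      have e : b • cplx q = (b * (η q / η p : ℝ)) • cplx p := by
        have hp0 := hp.1.ne'
        have : q = (η q / η p) • p := by
          rw [div_eq_inv_mul, ← smul_smul, ← hq, smul_smul, inv_mul_cancel₀ hp0, one_smul]
        ext i
        have hi := congrFun this i
        simp only [Pi.smul_apply, smul_eq_mul] at hi
        simp only [cplx, Pi.smul_apply, smul_eq_mul]
        rw [mul_assoc, ← Complex.ofReal_mul, ← hi]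
      rw [e, ← add_smul] at h0 ⊢
      have := exists_smul_mem_biTube hadd hsmul hp hp
        (a := a + b * (η q / η p : ℝ)) (b := 0) (by simp) (by simpa using h0)
      simpa using this
    rcases mem_coneOver_or_neg_mem hD hv hvD with h1 | h1 <;>
      rcases mem_coneOver_or_neg_mem hD hw hwD with h2 | h2
    · exact exists_smul_mem_biTube hadd hsmul h1 h2 hab h0
    · exact mixed v w a b h1 (opp v w h1 h2 hseg) h0
    · rw [add_comm (a • cplx v)] at h0 ⊢
      refine mixed w v b a h2 (opp w v h2 h1 ?_) h0
      rintro x ⟨s, t, hst, hx, rfl⟩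
      exact hseg ⟨t, s, by rwa [mul_comm], by rwa [add_comm], by simp only [add_comm]⟩
    · have e : a • cplx v + b • cplx w = (-a) • cplx (-v) + (-b) • cplx (-w) := by
        simp [cplx_neg]
      rw [e] at h0 ⊢
      exact exists_smul_mem_biTube hadd hsmul h1 h2 (by simpa using hab) h0
  · rintro ⟨c, hc⟩
    set p : RV n := fun i => ((c • z) i).re with hp
    set q : RV n := fun i => ((c • z) i).im with hq
    have hpC : p ∈ coneOver η D := hc.1
    have hqC : q ∈ coneOver η D := hc.2
    have hcz : c • z = (1 : ℂ) • cplx p + Complex.I • cplx q := by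
      rw [one_smul]
      exact eq_cplx_re_add_I_smul _
    have hc0 : c ≠ 0 := by
      rintro rfl
      exact hpC.2.1 (by ext i; simp [hp])
    simp only [eTube, Set.mem_iUnion]
    refine ⟨p, q, hpC.2.1, hqC.2.1, ?_, 1, Complex.I, by simp,
      hcz ▸ smul_ne_zero hc0 hz, ?_⟩
    · have pos : ∀ s t : ℝ, 0 ≤ s → 0 ≤ t → ∀ h : s • p + t • q ≠ 0,
          Projectivization.mk ℝ (s • p + t • q) h ∈ D := by
        intro s t hs ht h
        suffices s • p + t • q ∈ coneOver η D from this.2.2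
        rcases hs.eq_or_lt with rfl | hs'
        · rcases ht.eq_or_lt with rfl | ht'
          · simp at h
          · simpa using hsmul q hqC t ht'
        · rcases ht.eq_or_lt with rfl | ht'
          · simpa using hsmul p hpC s hs'
          · exact hadd _ (hsmul p hpC s hs') _ (hsmul q hqC t ht')
      rintro x ⟨s, t, hst, hx, rfl⟩
      rcases mul_nonneg_iff.1 hst with ⟨hs, ht⟩ | ⟨hs, ht⟩
      · exact pos s t hs ht hx
      · have e : (-1 : ℝ) • (s • p + t • q) = (-s) • p + (-t) • q := by module
        have hx' : (-s) • p + (-t) • q ≠ 0 := by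
          rw [← e]
          exact smul_ne_zero (by norm_num) hx
        have := pos (-s) (-t) (by linarith) (by linarith) hx'
        rwa [(Projectivization.mk_eq_mk_iff' ℝ _ _ hx' hx).2 ⟨-1, e⟩] at this
    · exact ((Projectivization.mk_eq_mk_iff' ℂ _ _ _ hz).2 ⟨c, hcz⟩).symm

end Tube

lemma contractibleSpace_of_retract {X Y : Type*} [TopologicalSpace X] [TopologicalSpace Y]
    [ContractibleSpace Y] (f : C(X, Y)) (g : C(Y, X)) (h : ∀ x, g (f x) = x) :
    ContractibleSpace X := by
  rw [contractible_iff_id_nullhomotopic]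
  have e : ContinuousMap.id X = g.comp ((ContinuousMap.id Y).comp f) := by
    ext x
    exact (h x).symm
  rw [e]
  exact ((id_nullhomotopic Y).comp_left f).comp_right g

/-- Let `T` be an open convex set of vectors on which the linear form `η` does not vanish. Then
the image of `T` in a projective subspace is empty or contractible. -/
lemma contractibleSpace_inter_of_convex {n : ℕ} {T : Set (CV n)} (hTo : IsOpen T)
    (hTc : Convex ℝ T) {η : CV n →ₗ[ℂ] ℂ} (hη : ∀ z ∈ T, η z ≠ 0) {E : Set (CP n)}
    (hE : ∀ z hz, Projectivization.mk ℂ z hz ∈ E ↔ ∃ c : ℂ, c • z ∈ T)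
    (W : Submodule ℂ (CV n)) (hne : (E ∩ {x | x.rep ∈ W}).Nonempty) :
    ContractibleSpace ↥(E ∩ {x | x.rep ∈ W}) := by
  have hηc : Continuous η := η.continuous_of_finiteDimensional
  have hηE : ∀ x ∈ E, η x.rep ≠ 0 := by
    intro x hx h
    rw [← x.mk_rep] at hx
    obtain ⟨c, hc⟩ := (hE _ _).1 hx
    exact hη _ hc (by rw [map_smul, h, smul_zero])
  have hT0 : ∀ z ∈ T, z ≠ 0 := fun z hz h => hη z hz (by rw [h, map_zero])
  let M : Set (CV n) := T ∩ (W : Set (CV n))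
  have hMc : Convex ℝ M := hTc.inter (W.restrictScalars ℝ).convex
  have hrep : ∀ x ∈ E, ∃ c : ℂ, c • affineRep η x ∈ T := by
    intro x hx
    rw [← x.mk_rep] at hx
    obtain ⟨c, hc⟩ := (hE _ _).1 hx
    refine ⟨c * η x.rep, ?_⟩
    rw [affineRep, smul_smul, mul_assoc, mul_inv_cancel₀ (hηE x (by rwa [← x.mk_rep])), mul_one]
    exact hc
  obtain ⟨s, hs⟩ := exists_continuous_forall_mem_convex_of_local_const
    (X := {z : CV n // ∃ c : ℂ, c • z ∈ T}) (E := ℂ) (t := fun z => {c : ℂ | c • z.1 ∈ T})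
    (fun z => by
      intro a ha b hb p q hp hq hpq
      have := hTc ha hb hp hq hpq
      simpa only [Set.mem_ofPred_eq, add_smul, smul_assoc] using this)
    (fun z => by
      obtain ⟨c, hc⟩ := z.2
      refine ⟨c, ?_⟩
      have hcont : Continuous fun y : {z : CV n // ∃ c : ℂ, c • z ∈ T} => c • y.1 :=
        continuous_subtype_val.const_smul c
      exact hcont.continuousAt.eventually_mem (hTo.mem_nhds hc))
  have hMne : M.Nonempty := by
    obtain ⟨x, hxE, hxW⟩ := hne
    obtain ⟨c, hc⟩ := hrep x hxE
    exact ⟨_, hc, W.smul_mem _ (W.smul_mem _ hxW)⟩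
  have : ContractibleSpace M := hMc.contractibleSpace hMne
  have hnorm : Continuous fun x : ↥(E ∩ {x | x.rep ∈ W}) =>
      (⟨affineRep η x.1, hrep x.1 x.2.1⟩ : {z : CV n // ∃ c : ℂ, c • z ∈ T}) :=
    Continuous.subtype_mk (continuousOn_iff_continuous_domRestrict.1
      ((continuousOn_affineRep η hηc).mono fun x hx => hηE x hx.1)) _
  let f : C(↥(E ∩ {x | x.rep ∈ W}), M) :=
    ⟨fun x => ⟨s ⟨affineRep η x.1, hrep x.1 x.2.1⟩ • affineRep η x.1,
      hs ⟨affineRep η x.1, hrep x.1 x.2.1⟩, W.smul_mem _ (W.smul_mem _ x.2.2)⟩,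
      Continuous.subtype_mk
        ((s.continuous.comp hnorm).smul (continuous_subtype_val.comp hnorm)) _⟩
  let g : C(M, ↥(E ∩ {x | x.rep ∈ W})) :=
    ⟨fun z => ⟨Projectivization.mk ℂ z.1 (hT0 z.1 z.2.1),
      (hE _ _).2 ⟨1, by rw [one_smul]; exact z.2.1⟩, (rep_mk_mem_iff W _ _).2 z.2.2⟩,
      Continuous.subtype_mk (isQuotientMap_mk'.continuous.comp
        (Continuous.subtype_mk continuous_subtype_val fun z => hT0 z.1 z.2.1)) _⟩
  refine contractibleSpace_of_retract f g fun x => Subtype.ext ?_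
  change Projectivization.mk ℂ (s _ • affineRep η x.1) _ = x.1
  conv_rhs => rw [← x.1.mk_rep]
  refine (Projectivization.mk_eq_mk_iff' ℂ _ _ _ _).2
    ⟨s ⟨affineRep η x.1, hrep x.1 x.2.1⟩ * (η x.1.rep)⁻¹, mul_smul _ _ _⟩

/-- A two-dimensional space contains a nonzero vector killed by a given linear form. -/
lemma exists_mem_form_eq_zero {n : ℕ} (η : CV n →ₗ[ℂ] ℂ) {W : Submodule ℂ (CV n)}
    (hW : Module.finrank ℂ W = 2) : ∃ z ∈ W, z ≠ 0 ∧ η z = 0 := by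
  have h : LinearMap.ker (η.domRestrict W) ≠ ⊥ :=
    LinearMap.ker_ne_bot_of_finrank_lt (by rw [hW]; simp)
  obtain ⟨z, hz, hz0⟩ := (Submodule.ne_bot_iff _).1 h
  exact ⟨z, z.2, by simpa using hz0, by simpa using hz⟩

/-- The elliptic tube over an open convex set that avoids a hyperplane is ℂ-convex. -/
lemma cConvex_eTube_of_avoids_hyperplane {n : ℕ} {D : Set (RP n)} (hDo : IsOpen D)
    (hconv : convexR D) (r : RV n)
    (hD : ∀ v h, Projectivization.mk ℝ v h ∈ D → Fintype.linearCombination ℝ r v ≠ 0) :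
    cConvex (eTube D) := by
  set η : RV n →ₗ[ℝ] ℝ := Fintype.linearCombination ℝ r with hηdef
  let ηC : CV n →ₗ[ℂ] ℂ := Fintype.linearCombination ℂ (cplx r)
  have hmem := mk_mem_eTube_iff hD hconv
  have hηC : ∀ z ∈ biTube (coneOver η D), ηC z ≠ 0 := by
    intro z hz h
    have h1 : (ηC z).re = η fun i => (z i).re := by
      simp [ηC, hηdef, Fintype.linearCombination_apply, cplx]
    have h2 := hz.1.1
    rw [← h1, h] at h2
    simp at h2
  have hcontr := contractibleSpace_inter_of_convex
    (isOpen_biTube (isOpen_coneOver η.continuous_of_finiteDimensional hDo))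
    (convex_biTube (convex_coneOver_of_add fun v hv w hw => add_mem_coneOver hD hconv hv hw))
    hηC hmem
  refine ⟨?_, ?_⟩
  · rintro _ ⟨W, hW, rfl⟩ hsub
    obtain ⟨z, hzW, hz0, hz⟩ := exists_mem_form_eq_zero ηC hW
    obtain ⟨c, hc⟩ := (hmem z hz0).1 (hsub ((rep_mk_mem_iff W z hz0).2 hzW))
    exact hηC _ hc (by rw [map_smul, hz, smul_zero])
  · rintro _ ⟨W, -, rfl⟩
    refine ⟨?_, fun hne => ?_⟩
    · rcases (eTube D ∩ {x | x.rep ∈ W}).eq_empty_or_nonempty with h | hne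
      · rw [h]
        exact isPreconnected_empty
      · have := hcontr W hne
        exact isPreconnected_iff_preconnectedSpace.2 inferInstance
    · have := hcontr W hne
      infer_instance

/-- Points of the affine chart of `g` avoid the hyperplane given by the last row of `g⁻¹`. -/
lemma linearCombination_ne_zero_of_mem_range_chartMap {n : ℕ}
    (g : Matrix.GeneralLinearGroup (Fin (n + 1)) ℝ) (v : RV n) (h : v ≠ 0)
    (hv : Projectivization.mk ℝ v h ∈ Set.range (chartMap g)) :
    Fintype.linearCombination ℝ
      ((↑g⁻¹ : Matrix (Fin (n + 1)) (Fin (n + 1)) ℝ) (Fin.last n)) v ≠ 0 := by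
  obtain ⟨x, hx⟩ := hv
  obtain ⟨a, ha⟩ := (Projectivization.mk_eq_mk_iff' ℝ _ _ _ h).1 hx
  have h1 : ((↑g⁻¹ : Matrix (Fin (n + 1)) (Fin (n + 1)) ℝ).mulVec (a • v)) (Fin.last n) = 1 := by
    rw [ha, Matrix.mulVec_mulVec, Units.inv_mul, Matrix.one_mulVec, Fin.snoc_last]
  intro h0
  rw [Matrix.mulVec_smul, Pi.smul_apply] at h1
  have h2 : ((↑g⁻¹ : Matrix (Fin (n + 1)) (Fin (n + 1)) ℝ).mulVec v) (Fin.last n) = 0 := by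
    rw [← h0, Fintype.linearCombination_apply]
    simp [Matrix.mulVec, dotProduct, mul_comm]
  rw [h2, smul_zero] at h1
  exact zero_ne_one h1

/-- If `D ⊆ ℝℙⁿ` is an open properly convex set whose boundary is of
class `C¹` (in an affine chart in which `D` is bounded), then the elliptic tube
`D^e ⊆ ℂℙⁿ` is ℂ-convex. -/
theorem eTube_cConvex_of_C1_boundary
    (n : ℕ) (D : Set (RP n)) (hDo : IsOpen D) (hpc : properlyConvexR D)
    (g : Matrix.GeneralLinearGroup (Fin (n + 1)) ℝ)
    (hrange : D ⊆ Set.range (chartMap g))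
    (hbdd : Bornology.IsBounded (chartMap g ⁻¹' D))
    (hC1 : boundaryC1 (chartMap g ⁻¹' D)) :
    cConvex (eTube D) := by
  exact cConvex_eTube_of_avoids_hyperplane hDo hpc.1 _ fun v h hv =>
    linearCombination_ne_zero_of_mem_range_chartMap g v h (hrange hv)
end
end
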